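/- arXiv:2203.16206 — 15 statements merged into one kernel-verified Lean document; each statement's English description precedes it below -/
import Mathlib

section
/- Let b : ℝ → ℝ be differentiable with b(0) = 0 and b'(v) = √(λ₁² − K·(λ₁²·cos²(b v) + λ₂²·sin²(b v))) for all v ∈ ℝ. Then: (1) b is odd, i.e. b(−v) = −b(v) for all v; (2) there exists W > 0 such that b(v + W) = b(v) + π for all v ∈ ℝ; (3) for this W, b(k·W) = k·π for every integer k, and b((2k+1)·W/2) = (2k+1)·π/2 for every integer k. -/
open Real

lemma sep_unique (F : ℝ → ℝ) (hF : Continuous F) (hpos : ∀ x, 0 < F x) (f g : ℝ → ℝ)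
    (hf : ∀ t, HasDerivAt f (F (f t)) t) (hg : ∀ t, HasDerivAt g (F (g t)) t)
    (h0 : f 0 = g 0) : ∀ t, f t = g t := by
  have hc : Continuous (fun x => (F x)⁻¹) := hF.inv₀ (fun x => (hpos x).ne')
  set G : ℝ → ℝ := fun x => ∫ t in (0:ℝ)..x, (F t)⁻¹ with hG
  have hGd : ∀ x, HasDerivAt G ((F x)⁻¹) x := fun x =>
    intervalIntegral.integral_hasDerivAt_right (hc.intervalIntegrable _ _)
      hc.aestronglyMeasurable.stronglyMeasurableAtFilter hc.continuousAt
  have hGm : StrictMono G := strictMono_of_deriv_pos (fun x => by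
    rw [(hGd x).deriv]; exact inv_pos.2 (hpos x))
  have key : ∀ u : ℝ → ℝ, (∀ t, HasDerivAt u (F (u t)) t) → ∀ t, HasDerivAt (fun s => G (u s)) 1 t := by
    intro u hu t
    have := (hGd (u t)).comp t (hu t)
    rwa [inv_mul_cancel₀ (hpos _).ne'] at this
  have hd : ∀ t, HasDerivAt (fun s => G (f s) - G (g s)) 0 t := fun t => by
    have h := (key f hf t).sub (key g hg t)
    rw [sub_self] at h
    exact h
  intro t
  have := is_const_of_deriv_eq_zero (fun t => (hd t).differentiableAt) (fun t => (hd t).deriv) t 0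
  simp only [h0, sub_self] at this
  exact hGm.injective (sub_eq_zero.1 this)

theorem helicoid_b_odd_quasiperiodic
    (l1 l2 K : ℝ) (hl : l1 ≥ l2) (hl2 : l2 > 0) (hK : K ∈ Set.Ioo (-1 : ℝ) 1)
    (b : ℝ → ℝ) (hb : Differentiable ℝ b) (hb0 : b 0 = 0)
    (hb' : ∀ v, deriv b v =
      Real.sqrt (l1 ^ 2 - K * (l1 ^ 2 * Real.cos (b v) ^ 2 + l2 ^ 2 * Real.sin (b v) ^ 2))) :
    (∀ v, b (-v) = -b v) ∧
    ∃ W > 0, (∀ v, b (v + W) = b v + π) ∧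
      (∀ k : ℤ, b (k * W) = k * π) ∧
      (∀ k : ℤ, b ((2 * k + 1) * W / 2) = (2 * k + 1) * π / 2) := by
  obtain ⟨hK1, hK2⟩ := hK
  set F : ℝ → ℝ := fun x =>
    Real.sqrt (l1 ^ 2 - K * (l1 ^ 2 * Real.cos x ^ 2 + l2 ^ 2 * Real.sin x ^ 2)) with hFdef
  have hFc : Continuous F := by fun_prop
  have hc : 0 < l1 ^ 2 * (1 - |K|) :=
    mul_pos (pow_pos (by linarith) 2) (by linarith [abs_lt.2 ⟨hK1, hK2⟩])
  set m := Real.sqrt (l1 ^ 2 * (1 - |K|)) with hm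
  have hmpos : 0 < m := Real.sqrt_pos.2 hc
  have hFm : ∀ x, m ≤ F x := by
    intro x
    apply Real.sqrt_le_sqrt
    have h1 := Real.sin_sq_add_cos_sq x
    have h2 : l2 ^ 2 ≤ l1 ^ 2 := pow_le_pow_left₀ hl2.le hl 2
    have hQ : l1 ^ 2 * Real.cos x ^ 2 + l2 ^ 2 * Real.sin x ^ 2 ≤ l1 ^ 2 := by
      nlinarith [mul_le_mul_of_nonneg_right h2 (sq_nonneg (Real.sin x))]
    have hQ0 : 0 ≤ l1 ^ 2 * Real.cos x ^ 2 + l2 ^ 2 * Real.sin x ^ 2 := by positivity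
    have := mul_le_mul (le_abs_self K) hQ hQ0 (abs_nonneg K)
    linarith
  have hFp : ∀ x, 0 < F x := fun x => hmpos.trans_le (hFm x)
  have hbd : ∀ t, HasDerivAt b (F (b t)) t := fun t => by
    have := (hb t).hasDerivAt
    rwa [hb' t] at this
  have hodd : ∀ v, b (-v) = -b v := by
    intro v
    have := sep_unique F hFc hFp b (fun t => -b (-t)) hbd (fun t => by
      have h := ((hbd (-t)).comp t (hasDerivAt_neg t)).neg
      have e : F (-b (-t)) = F (b (-t)) := by simp [hFdef]
      rw [e]
      rw [mul_neg_one, neg_neg] at h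
      exact h) (by simp [hb0]) v
    linarith
  have hmono : Monotone (fun v => b v - m * v) := by
    have hd : ∀ t, HasDerivAt (fun v => b v - m * v) (F (b t) - m) t := fun t => by
      have h := (hbd t).sub ((hasDerivAt_id t).const_mul m)
      rw [mul_one] at h
      exact h
    exact monotone_of_deriv_nonneg (fun t => (hd t).differentiableAt)
      (fun t => by rw [(hd t).deriv]; linarith [hFm (b t)])
  have hW0 : 0 ≤ π / m := by positivity
  have hge : π ≤ b (π / m) := by
    have := hmono hW0
    simp only [hb0] at this
    rw [mul_div_cancel₀ _ hmpos.ne'] at this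
    linarith
  obtain ⟨W, ⟨hWa, -⟩, hW⟩ := intermediate_value_Icc hW0 hb.continuous.continuousOn
    (show π ∈ Set.Icc (b 0) (b (π / m)) from ⟨by rw [hb0]; exact pi_pos.le, hge⟩)
  have hWpos : 0 < W := lt_of_le_of_ne hWa (by
    rintro rfl
    rw [hb0] at hW
    exact pi_pos.ne hW)
  have hper : ∀ v, b (v + W) = b v + π := by
    intro v
    have := sep_unique F hFc hFp b (fun t => b (t + W) - π) hbd (fun t => by
      have h := ((hbd (t + W)).comp_add_const t W).sub_const π
      have e : F (b (t + W) - π) = F (b (t + W)) := by simp [hFdef]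
      rw [e]
      exact h) (by simp [hb0, hW]) v
    linarith
  have hperk : ∀ (k : ℤ) (v : ℝ), b (v + k * W) = b v + k * π := by
    intro k
    induction k using Int.induction_on with
    | zero => intro v; simp
    | succ i ih =>
      intro v
      have h1 := hper (v + (i : ℤ) * W)
      rw [ih v] at h1
      push_cast at h1 ⊢
      rw [show v + ((i : ℝ) + 1) * W = v + i * W + W by ring, h1]; ring
    | pred i ih =>
      intro v
      have h1 := hper (v + ((-(i : ℤ) - 1 : ℤ) : ℝ) * W)
      have h2 := ih v
      push_cast at h1 h2 ⊢
      rw [show v + (-(i : ℝ) - 1) * W + W = v + -i * W by ring, h2] at h1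
      linarith
  refine ⟨hodd, W, hWpos, hper, fun k => ?_, fun k => ?_⟩
  · simpa [hb0] using hperk k 0
  · have h1 := hper (-(W / 2))
    rw [hodd, show -(W / 2) + W = W / 2 by ring] at h1
    have h2 := hperk k (W / 2)
    rw [show (2 * (k : ℝ) + 1) * W / 2 = W / 2 + k * W by ring, h2]
    linarith
end

section
/- Let b : ℝ → ℝ be differentiable with b(0) = 0 and b'(v) = √(λ₁² − K·(λ₁²·cos²(b v) + λ₂²·sin²(b v))) for all v. Define g : ℝ × ℝ → ℂ by g(u,v) = exp(−λ₁·u)·(cos(b v) + i·sin(b v)), let g_u, g_v denote the partial derivatives of g, set g_z = (g_u − i·g_v)/2 and g_z̄ = (g_u + i·g_v)/2, and set g_{zz̄} = (g_{uu} + g_{vv})/4. Then at every point (u,v): (1) g_{zz̄}·[λ₁²·(g + conj g)² − λ₂²·(g − conj g)²] = 2·[λ₁²·(g + conj g) − λ₂²·(g − conj g)]·g_z·g_z̄; and (2) g_z·conj(g_z̄) = (K/16)·[λ₁²·(g + conj g)² − λ₂²·(g − conj g)²]. -/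
open Real Complex

/-- The Gauss map `g(u+iv) = e^{-λ₁ u} e^{i b(v)}` of the helicoidal surface. -/
noncomputable def helicoidGauss (l1 : ℝ) (b : ℝ → ℝ) (u v : ℝ) : ℂ :=
  (Real.exp (-l1 * u) : ℂ) * ((Real.cos (b v) : ℂ) + Complex.I * (Real.sin (b v) : ℂ))

/-- Partial derivative in `u`. -/
noncomputable def helicoidGauss_u (l1 : ℝ) (b : ℝ → ℝ) (u v : ℝ) : ℂ :=
  deriv (fun t => helicoidGauss l1 b t v) u

/-- Partial derivative in `v`. -/
noncomputable def helicoidGauss_v (l1 : ℝ) (b : ℝ → ℝ) (u v : ℝ) : ℂ :=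
  deriv (fun t => helicoidGauss l1 b u t) v

/-- Second partial derivative in `u`. -/
noncomputable def helicoidGauss_uu (l1 : ℝ) (b : ℝ → ℝ) (u v : ℝ) : ℂ :=
  deriv (fun t => helicoidGauss_u l1 b t v) u

/-- Second partial derivative in `v`. -/
noncomputable def helicoidGauss_vv (l1 : ℝ) (b : ℝ → ℝ) (u v : ℝ) : ℂ :=
  deriv (fun t => helicoidGauss_v l1 b u t) v

/-- Wirtinger derivative `g_z = (g_u - i g_v)/2`. -/
noncomputable def helicoidGauss_z (l1 : ℝ) (b : ℝ → ℝ) (u v : ℝ) : ℂ :=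
  (helicoidGauss_u l1 b u v - Complex.I * helicoidGauss_v l1 b u v) / 2

/-- Wirtinger derivative `g_z̄ = (g_u + i g_v)/2`. -/
noncomputable def helicoidGauss_zbar (l1 : ℝ) (b : ℝ → ℝ) (u v : ℝ) : ℂ :=
  (helicoidGauss_u l1 b u v + Complex.I * helicoidGauss_v l1 b u v) / 2

/-- Mixed Wirtinger derivative `g_{z z̄} = (g_{uu} + g_{vv})/4`. -/
noncomputable def helicoidGauss_zzbar (l1 : ℝ) (b : ℝ → ℝ) (u v : ℝ) : ℂ :=
  (helicoidGauss_uu l1 b u v + helicoidGauss_vv l1 b u v) / 4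

lemma hg_u (l1 : ℝ) (b : ℝ → ℝ) (u v : ℝ) :
    HasDerivAt (fun t => helicoidGauss l1 b t v) (-(l1 : ℂ) * helicoidGauss l1 b u v) u := by
  unfold helicoidGauss
  have h1 : HasDerivAt (fun t : ℝ => Real.exp (-l1 * t)) (Real.exp (-l1 * u) * (-l1 * 1)) u :=
    ((hasDerivAt_id u).const_mul (-l1)).exp
  have h2 := (h1.ofReal_comp).mul_const ((Real.cos (b v) : ℂ) + Complex.I * (Real.sin (b v) : ℂ))
  refine h2.congr_deriv ?_
  push_cast
  ring

lemma hg_v (l1 : ℝ) (b : ℝ → ℝ) (u v b' : ℝ) (hb : HasDerivAt b b' v) :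
    HasDerivAt (fun t => helicoidGauss l1 b u t)
      (Complex.I * (b' : ℂ) * helicoidGauss l1 b u v) v := by
  unfold helicoidGauss
  have h2 := ((hb.cos.ofReal_comp).add ((hb.sin.ofReal_comp).const_mul Complex.I)).const_mul
    (Real.exp (-l1 * u) : ℂ)
  refine h2.congr_deriv ?_
  push_cast
  linear_combination (-(Complex.exp (-l1 * u) * b' * Complex.sin (b v))) * Complex.I_sq

theorem helicoidGauss_harmonic_and_Hopf
    (l1 l2 K : ℝ) (hl : l1 ≥ l2) (hl2 : l2 > 0) (hK : K ∈ Set.Ioo (-1 : ℝ) 1)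
    (b : ℝ → ℝ) (hb : Differentiable ℝ b) (hb0 : b 0 = 0)
    (hb' : ∀ v, deriv b v =
      Real.sqrt (l1 ^ 2 - K * (l1 ^ 2 * Real.cos (b v) ^ 2 + l2 ^ 2 * Real.sin (b v) ^ 2))) :
    ∀ u v : ℝ,
      (helicoidGauss_zzbar l1 b u v *
          ((l1 : ℂ) ^ 2 * (helicoidGauss l1 b u v + (starRingEnd ℂ) (helicoidGauss l1 b u v)) ^ 2 -
            (l2 : ℂ) ^ 2 * (helicoidGauss l1 b u v - (starRingEnd ℂ) (helicoidGauss l1 b u v)) ^ 2) =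
        2 * ((l1 : ℂ) ^ 2 * (helicoidGauss l1 b u v + (starRingEnd ℂ) (helicoidGauss l1 b u v)) -
            (l2 : ℂ) ^ 2 * (helicoidGauss l1 b u v - (starRingEnd ℂ) (helicoidGauss l1 b u v))) *
          helicoidGauss_z l1 b u v * helicoidGauss_zbar l1 b u v) ∧
      helicoidGauss_z l1 b u v * (starRingEnd ℂ) (helicoidGauss_zbar l1 b u v) =
        ((K : ℂ) / 16) *
          ((l1 : ℂ) ^ 2 * (helicoidGauss l1 b u v + (starRingEnd ℂ) (helicoidGauss l1 b u v)) ^ 2 -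
            (l2 : ℂ) ^ 2 * (helicoidGauss l1 b u v - (starRingEnd ℂ) (helicoidGauss l1 b u v)) ^ 2) := by
  intro u v
  have hpos : ∀ v, 0 < l1 ^ 2 - K * (l1 ^ 2 * Real.cos (b v) ^ 2 + l2 ^ 2 * Real.sin (b v) ^ 2) := by
    intro v
    obtain ⟨_, hK2⟩ := hK
    have h1 := Real.sin_sq_add_cos_sq (b v)
    have hc := sq_nonneg (Real.cos (b v))
    have hs := sq_nonneg (Real.sin (b v))
    have hll : l2 ^ 2 ≤ l1 ^ 2 := by nlinarith
    have hl2p : 0 < l2 ^ 2 := by positivity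
    have hA : l2 ^ 2 ≤ l1 ^ 2 * Real.cos (b v) ^ 2 + l2 ^ 2 * Real.sin (b v) ^ 2 := by nlinarith
    have hA' : l1 ^ 2 * Real.cos (b v) ^ 2 + l2 ^ 2 * Real.sin (b v) ^ 2 ≤ l1 ^ 2 := by nlinarith
    nlinarith
  have hsq : deriv b v ^ 2 =
      l1 ^ 2 - K * (l1 ^ 2 * Real.cos (b v) ^ 2 + l2 ^ 2 * Real.sin (b v) ^ 2) := by
    rw [hb', Real.sq_sqrt (hpos v).le]
  have hbd : ∀ t, HasDerivAt b (deriv b t) t := fun t => (hb t).hasDerivAt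
  have hb2 : HasDerivAt (deriv b)
      (K * (l1 ^ 2 - l2 ^ 2) * Real.sin (b v) * Real.cos (b v)) v := by
    have e : deriv b = fun v => Real.sqrt (l1 ^ 2 - K * (l1 ^ 2 * Real.cos (b v) ^ 2 + l2 ^ 2 * Real.sin (b v) ^ 2)) := funext hb'
    have h := (((((hbd v).cos.pow 2).const_mul (l1 ^ 2)).add
      (((hbd v).sin.pow 2).const_mul (l2 ^ 2))).const_mul K).const_sub (l1 ^ 2)
    have h' := h.sqrt (hpos v).ne'
    have hne : deriv b v ≠ 0 := by
      rw [hb']; exact (Real.sqrt_pos.2 (hpos v)).ne'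
    rw [e]
    refine h'.congr_deriv ?_
    simp only [Pi.add_apply, Pi.pow_apply]
    rw [← hb' v]
    field_simp
    push_cast
    ring
  have Hu : ∀ t, helicoidGauss_u l1 b t v = -(l1 : ℂ) * helicoidGauss l1 b t v :=
    fun t => (hg_u l1 b t v).deriv
  have Hv : ∀ t, helicoidGauss_v l1 b u t = Complex.I * ((deriv b t : ℝ) : ℂ) * helicoidGauss l1 b u t :=
    fun t => (hg_v l1 b u t _ (hbd t)).deriv
  have Huu : helicoidGauss_uu l1 b u v = (l1 : ℂ) ^ 2 * helicoidGauss l1 b u v := by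
    unfold helicoidGauss_uu
    rw [funext Hu, ((hg_u l1 b u v).const_mul (-(l1 : ℂ))).deriv]
    ring
  have Hvv : helicoidGauss_vv l1 b u v =
      (Complex.I * ((K * (l1 ^ 2 - l2 ^ 2) * Real.sin (b v) * Real.cos (b v) : ℝ) : ℂ)
        - ((deriv b v : ℝ) : ℂ) ^ 2) * helicoidGauss l1 b u v := by
    unfold helicoidGauss_vv
    rw [funext Hv]
    refine ((((hb2.ofReal_comp).const_mul Complex.I).mul
      (hg_v l1 b u v _ (hbd v))).congr_deriv ?_).deriv
    linear_combination (((deriv b v : ℝ) : ℂ) ^ 2 * helicoidGauss l1 b u v) * Complex.I_sq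
  have hsqC : ((deriv b v : ℝ) : ℂ) ^ 2 = (l1 : ℂ) ^ 2 - K * ((l1 : ℂ) ^ 2 * (Real.cos (b v) : ℂ) ^ 2
      + (l2 : ℂ) ^ 2 * (Real.sin (b v) : ℂ) ^ 2) := by
    exact_mod_cast hsq
  have hconj : (starRingEnd ℂ) (helicoidGauss l1 b u v) = (Real.exp (-l1 * u) : ℂ) *
      ((Real.cos (b v) : ℂ) - Complex.I * (Real.sin (b v) : ℂ)) := by
    unfold helicoidGauss
    simp only [map_mul, map_add, Complex.conj_ofReal, Complex.conj_I]
    ring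
  have hz : helicoidGauss_z l1 b u v = (-(l1 : ℂ) + ((deriv b v : ℝ) : ℂ)) / 2 * helicoidGauss l1 b u v := by
    unfold helicoidGauss_z
    rw [Hu, Hv]
    linear_combination (-((deriv b v : ℝ) : ℂ) * helicoidGauss l1 b u v / 2) * Complex.I_sq
  have hzb : helicoidGauss_zbar l1 b u v =
      (((-l1 - deriv b v) / 2 : ℝ) : ℂ) * helicoidGauss l1 b u v := by
    unfold helicoidGauss_zbar
    rw [Hu, Hv]
    push_cast
    linear_combination (((deriv b v : ℝ) : ℂ) * helicoidGauss l1 b u v / 2) * Complex.I_sq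
  have hg : helicoidGauss l1 b u v = (Real.exp (-l1 * u) : ℂ) *
      ((Real.cos (b v) : ℂ) + Complex.I * (Real.sin (b v) : ℂ)) := rfl
  unfold helicoidGauss_zzbar
  rw [Huu, Hvv, hz, hzb, map_mul, Complex.conj_ofReal, hconj, hg]
  have hcs : (Real.sin (b v) : ℂ) ^ 2 + (Real.cos (b v) : ℂ) ^ 2 = 1 := by
    exact_mod_cast Real.sin_sq_add_cos_sq (b v)
  push_cast at hsqC hcs ⊢
  clear hz hzb hconj hg Hu Hv Huu Hvv hsq hb2 hpos hbd
  generalize ((deriv b v : ℝ) : ℂ) = d at *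
  generalize hE : Complex.exp (-(l1 : ℂ) * u) = E at *
  generalize Complex.cos (b v : ℂ) = c at *
  generalize Complex.sin (b v : ℂ) = s at *
  have hI := Complex.I_sq
  generalize Complex.I = I at *
  generalize (l1 : ℂ) = p at *
  generalize (l2 : ℂ) = q at *
  generalize (K : ℂ) = k at *
  have e1 : E * (c + I * s) + E * (c - I * s) = 2 * E * c := by ring
  have e2 : E * (c + I * s) - E * (c - I * s) = 2 * E * I * s := by ring
  have e3 : p ^ 2 * (2 * E * c) ^ 2 - q ^ 2 * (2 * E * I * s) ^ 2 =
      4 * E ^ 2 * (p ^ 2 * c ^ 2 + q ^ 2 * s ^ 2) := by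
    linear_combination (-4 * q ^ 2 * E ^ 2 * s ^ 2) * hI
  rw [e1, e2, e3]
  constructor
  · have e4 : (p ^ 2 * c - q ^ 2 * (I * s)) * (c + I * s) =
        p ^ 2 * c ^ 2 + q ^ 2 * s ^ 2 + I * (p ^ 2 - q ^ 2) * s * c := by
      linear_combination (-q ^ 2 * s ^ 2) * hI
    have e5 : p ^ 2 - d ^ 2 = k * (p ^ 2 * c ^ 2 + q ^ 2 * s ^ 2) := by
      linear_combination -hsqC
    linear_combination (E ^ 3 * (c + I * s) * (p ^ 2 * c ^ 2 + q ^ 2 * s ^ 2)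
      - E ^ 3 * (c + I * s) * ((p ^ 2 * c - q ^ 2 * (I * s)) * (c + I * s))) * e5
      - E ^ 3 * (c + I * s) * k * (p ^ 2 * c ^ 2 + q ^ 2 * s ^ 2) * e4
  · have e5 : p ^ 2 - d ^ 2 = k * (p ^ 2 * c ^ 2 + q ^ 2 * s ^ 2) := by
      linear_combination -hsqC
    have e6 : (c + I * s) * (c - I * s) = 1 := by
      linear_combination hcs - s ^ 2 * hI
    linear_combination (E ^ 2 / 4 * (p ^ 2 - d ^ 2)) * e6 + E ^ 2 / 4 * e5
end

section
/- Let b : ℝ → ℝ be differentiable with b(0) = 0 and b'(v) = √(λ₁² − K·(λ₁²·cos²(b v) + λ₂²·sin²(b v))) for all v, let W > 0 satisfy b(v + W) = b(v) + π for all v, and let x₃ : ℝ → ℝ be differentiable with x₃(0) = 0 and x₃'(v) = λ₁·λ₂·K/(λ₁ + b'(v)) for all v. Then: (1) x₃ is a bijection from ℝ to ℝ; (2) x₃ is odd, i.e. x₃(−v) = −x₃(v) for all v; (3) x₃(v + W) = x₃(v) + x₃(W) for all v ∈ ℝ. -/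
open Real

theorem helicoid_x3_properties
    (l1 l2 K : ℝ) (hl : l1 ≥ l2) (hl2 : l2 > 0) (hK : K ∈ Set.Ioo (-1 : ℝ) 1) (hK0 : K ≠ 0)
    (b : ℝ → ℝ) (hb : Differentiable ℝ b) (hb0 : b 0 = 0)
    (hb' : ∀ v, deriv b v =
      Real.sqrt (l1 ^ 2 - K * (l1 ^ 2 * Real.cos (b v) ^ 2 + l2 ^ 2 * Real.sin (b v) ^ 2)))
    (W : ℝ) (hW : W > 0) (hbW : ∀ v, b (v + W) = b v + π)
    (x3 : ℝ → ℝ) (hx3 : Differentiable ℝ x3) (hx30 : x3 0 = 0)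
    (hx3' : ∀ v, deriv x3 v = l1 * l2 * K / (l1 + deriv b v)) :
    Function.Bijective x3 ∧ (∀ v, x3 (-v) = -x3 v) ∧ (∀ v, x3 (v + W) = x3 v + x3 W) := by
  obtain ⟨hK1, hK2⟩ := hK
  have hl1 : 0 < l1 := lt_of_lt_of_le hl2 hl
  have hsq : l2 ^ 2 ≤ l1 ^ 2 := pow_le_pow_left₀ hl2.le hl 2
  have hl2s : 0 < l2 ^ 2 := by positivity
  obtain ⟨Q, hQ⟩ : ∃ Q : ℝ → ℝ, Q = fun y => l1 ^ 2 * Real.cos y ^ 2 + l2 ^ 2 * Real.sin y ^ 2 :=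
    ⟨_, rfl⟩
  have hQ1 : ∀ y, Q y ≤ l1 ^ 2 := fun y => by
    have := Real.sin_sq_add_cos_sq y
    simp only [hQ]
    nlinarith [mul_nonneg (sub_nonneg.2 hsq) (sq_nonneg (Real.sin y))]
  have hQ0 : ∀ y, 0 < Q y := fun y => by
    have := Real.sin_sq_add_cos_sq y
    simp only [hQ]
    nlinarith [mul_nonneg (sub_nonneg.2 hsq) (sq_nonneg (Real.cos y))]
  obtain ⟨g, hg⟩ : ∃ g : ℝ → ℝ, g = fun y => Real.sqrt (l1 ^ 2 - K * Q y) := ⟨_, rfl⟩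
  have hbg : ∀ v, deriv b v = g (b v) := fun v => by rw [hb', hg, hQ]
  have hg0 : ∀ y, 0 < g y := fun y => by
    simp only [hg]
    apply Real.sqrt_pos.2
    nlinarith [hQ0 y, hQ1 y, mul_pos (sub_pos.2 hK2) (hQ0 y)]
  have hg1 : ∀ y, g y ≤ 2 * l1 := fun y => by
    simp only [hg]
    apply Real.sqrt_le_iff.2 ⟨by positivity, ?_⟩
    nlinarith [hQ0 y, hQ1 y, mul_pos (sub_pos.2 hK1) (hQ0 y), sq_nonneg l1]
  have hgc : Continuous g := by
    rw [hg, hQ]; fun_prop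
  have hgneg : ∀ y, g (-y) = g y := fun y => by simp [hg, hQ]
  have hgpi : ∀ y, g (y + π) = g y := fun y => by simp [hg, hQ]
  have hinvc : Continuous fun y => (g y)⁻¹ := hgc.inv₀ fun y => (hg0 y).ne'
  obtain ⟨F, hF⟩ : ∃ F : ℝ → ℝ, F = fun y => ∫ t in (0:ℝ)..y, (g t)⁻¹ := ⟨_, rfl⟩
  have hFd : ∀ y, HasDerivAt F (g y)⁻¹ y := fun y => by
    rw [hF]; exact hinvc.integral_hasStrictDerivAt 0 y |>.hasDerivAt
  have hF0 : F 0 = 0 := by simp [hF]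
  have hFmono : StrictMono F := strictMono_of_deriv_pos fun y => by
    rw [(hFd y).deriv]; exact inv_pos.2 (hg0 y)
  have key : ∀ f : ℝ → ℝ, (∀ v, HasDerivAt f 0 v) → ∀ v, f v = f 0 := fun f hf v =>
    is_const_of_deriv_eq_zero (fun v => (hf v).differentiableAt) (fun v => (hf v).deriv) v 0
  have hbd : ∀ v, HasDerivAt b (g (b v)) v := fun v => by
    rw [← hbg]; exact (hb v).hasDerivAt
  have hFb : ∀ v, F (b v) = v := fun v => by
    have := key (fun v => F (b v) - v) (fun v => by
      have h := ((hFd (b v)).comp v (hbd v)).sub (hasDerivAt_id v)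
      rw [inv_mul_cancel₀ (hg0 _).ne', sub_self] at h
      exact h) v
    simp only [hb0, hF0] at this
    linarith
  have hFodd : ∀ y, F (-y) = - F y := fun y => by
    have := key (fun y => F (-y) + F y) (fun v => by
      have h := ((hFd (-v)).comp v (hasDerivAt_neg v)).add (hFd v)
      rw [hgneg, mul_neg_one, neg_add_cancel] at h
      exact h) y
    simp only [neg_zero, hF0] at this
    linarith
  have hbodd : ∀ v, b (-v) = - b v := fun v => hFmono.injective (by rw [hFodd, hFb, hFb])
  obtain ⟨p, hp⟩ : ∃ p : ℝ → ℝ, p = fun v => l1 * l2 * K / (l1 + g (b v)) := ⟨_, rfl⟩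
  have hxd : ∀ v, HasDerivAt x3 (p v) v := fun v => by
    have := (hx3 v).hasDerivAt
    rw [hx3', hbg] at this
    rw [hp]; exact this
  have hpneg : ∀ v, p (-v) = p v := fun v => by simp only [hp, hbodd, hgneg]
  have hpW : ∀ v, p (v + W) = p v := fun v => by simp only [hp, hbW, hgpi]
  refine ⟨?_, fun v => ?_, fun v => ?_⟩
  · have hyd : ∀ v, HasDerivAt (fun v => x3 v / K) (p v / K) v := fun v => (hxd v).div_const K
    have hc : 0 < l2 / 3 := by positivity
    have hpc : ∀ v, l2 / 3 ≤ p v / K := fun v => by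
      have h0 := hg0 (b v)
      have h1 := hg1 (b v)
      have : p v / K = l1 * l2 / (l1 + g (b v)) := by
        simp only [hp]; field_simp
      rw [this, div_le_div_iff₀ (by norm_num) (by positivity)]
      nlinarith
    have hsm : StrictMono fun v => x3 v / K := strictMono_of_deriv_pos fun v => by
      rw [(hyd v).deriv]; exact hc.trans_le (hpc v)
    have hzd : ∀ v, HasDerivAt (fun v => x3 v / K - l2 / 3 * v) (p v / K - l2 / 3 * 1) v :=
      fun v => (hyd v).sub ((hasDerivAt_id v).const_mul _)
    have hm : Monotone fun v => x3 v / K - l2 / 3 * v :=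
      monotone_of_deriv_nonneg (fun v => (hzd v).differentiableAt) fun v => by
        rw [(hzd v).deriv]; linarith [hpc v]
    have hsurj : Function.Surjective fun v => x3 v / K := by
      apply Continuous.surjective (hx3.continuous.div_const K)
      · refine Filter.tendsto_atTop_mono' _ ?_ (Filter.tendsto_id.const_mul_atTop hc)
        filter_upwards [Filter.eventually_ge_atTop 0] with v hv
        have := hm hv
        simp [hx30] at this ⊢
        linarith
      · refine Filter.tendsto_atBot_mono' _ ?_ (Filter.tendsto_id.const_mul_atBot hc)
        filter_upwards [Filter.eventually_le_atBot 0] with v hv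
        have := hm hv
        simp [hx30] at this ⊢
        linarith
    refine ⟨fun u v h => hsm.injective (by simp only [h]), fun y => ?_⟩
    obtain ⟨v, hv⟩ := hsurj (y / K)
    exact ⟨v, (div_left_inj' hK0).1 hv⟩
  · have := key (fun y => x3 (-y) + x3 y) (fun v => by
      have h := ((hxd (-v)).comp v (hasDerivAt_neg v)).add (hxd v)
      rw [hpneg, mul_neg_one, neg_add_cancel] at h
      exact h) v
    simp only [neg_zero, hx30] at this
    linarith
  · have := key (fun y => x3 (y + W) - x3 y) (fun v => by
      have h := ((hxd (v + W)).comp_add_const v W).sub (hxd v)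
      rw [hpW, sub_self] at h
      exact h) v
    simp only [zero_add, hx30] at this
    linarith
end

section
/- Let b : ℝ → ℝ be differentiable with b(0) = 0 and b'(v) = √(λ₁² − K·(λ₁²·cos²(b v) + λ₂²·sin²(b v))) for all v, let W > 0 satisfy b(v + W) = b(v) + π for all v, and let x₃ : ℝ → ℝ be differentiable with x₃(0) = 0 and x₃'(v) = λ₁·λ₂·K/(λ₁ + b'(v)). Define X : ℝ × ℝ → ℝ³ by X(u,v) = (x₁(u,v), x₂(u,v), x₃(v)) with x₁(u,v) = (1/(λ₁²·λ₂))·((1/λ₁)·cos(x₃ v)·sin(b v) + (1/λ₂)·sin(x₃ v)·cos(b v))·x₃'(v)·sinh(−λ₁·u) and x₂(u,v) = (1/(λ₁²·λ₂))·((1/λ₁)·sin(x₃ v)·sin(b v) − (1/λ₂)·cos(x₃ v)·cos(b v))·x₃'(v)·sinh(−λ₁·u). Then for all u, v ∈ ℝ one has (0, 0, 2·x₃(W)) * X(u,v) = X(u, v + 2W), where * is the group operation of the universal cover of E(2). -/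
open Real

/-- The group operation of the universal cover of `E(2)` on `ℝ³`. -/
noncomputable def e2Mul (a b : ℝ × ℝ × ℝ) : ℝ × ℝ × ℝ :=
  (a.1 + b.1 * Real.cos a.2.2 - b.2.1 * Real.sin a.2.2,
   a.2.1 + b.1 * Real.sin a.2.2 + b.2.1 * Real.cos a.2.2,
   a.2.2 + b.2.2)

/-- First coordinate of the helicoidal immersion. -/
noncomputable def helicoidX1 (l1 l2 : ℝ) (b x3 : ℝ → ℝ) (u v : ℝ) : ℝ :=
  (1 / (l1 ^ 2 * l2)) *
    ((1 / l1) * Real.cos (x3 v) * Real.sin (b v) + (1 / l2) * Real.sin (x3 v) * Real.cos (b v)) *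
    deriv x3 v * Real.sinh (-l1 * u)

/-- Second coordinate of the helicoidal immersion. -/
noncomputable def helicoidX2 (l1 l2 : ℝ) (b x3 : ℝ → ℝ) (u v : ℝ) : ℝ :=
  (1 / (l1 ^ 2 * l2)) *
    ((1 / l1) * Real.sin (x3 v) * Real.sin (b v) - (1 / l2) * Real.cos (x3 v) * Real.cos (b v)) *
    deriv x3 v * Real.sinh (-l1 * u)

/-- The helicoidal immersion `X(u,v)`. -/
noncomputable def helicoidX (l1 l2 : ℝ) (b x3 : ℝ → ℝ) (u v : ℝ) : ℝ × ℝ × ℝ :=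
  (helicoidX1 l1 l2 b x3 u v, helicoidX2 l1 l2 b x3 u v, x3 v)

theorem helicoid_invariant_under_vertical_translation
    (l1 l2 K : ℝ) (hl : l1 ≥ l2) (hl2 : l2 > 0) (hK : K ∈ Set.Ioo (-1 : ℝ) 1) (hK0 : K ≠ 0)
    (b : ℝ → ℝ) (hb : Differentiable ℝ b) (hb0 : b 0 = 0)
    (hb' : ∀ v, deriv b v =
      Real.sqrt (l1 ^ 2 - K * (l1 ^ 2 * Real.cos (b v) ^ 2 + l2 ^ 2 * Real.sin (b v) ^ 2)))
    (W : ℝ) (hW : W > 0) (hbW : ∀ v, b (v + W) = b v + π)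
    (x3 : ℝ → ℝ) (hx3 : Differentiable ℝ x3) (hx30 : x3 0 = 0)
    (hx3' : ∀ v, deriv x3 v = l1 * l2 * K / (l1 + deriv b v)) :
    ∀ u v : ℝ,
      e2Mul (0, 0, 2 * x3 W) (helicoidX l1 l2 b x3 u v) = helicoidX l1 l2 b x3 u (v + 2 * W) := by
  intro u v
  have hd : ∀ t, deriv x3 (t + W) = deriv x3 t := by
    intro t
    rw [hx3', hx3', hb', hb', hbW, Real.cos_add_pi, Real.sin_add_pi, neg_sq, neg_sq]
  have hdiff : Differentiable ℝ (fun t => x3 (t + W) - x3 t) :=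
    (hx3.comp (differentiable_id.add_const W)).sub hx3
  have hz : ∀ t, deriv (fun t => x3 (t + W) - x3 t) t = 0 := by
    intro t
    have h1 : HasDerivAt (fun t => x3 (t + W)) (deriv x3 (t + W)) t :=
      (hx3 (t + W)).hasDerivAt.comp_add_const t W
    have h2 := (h1.sub (hx3 t).hasDerivAt).deriv
    rw [hd t, sub_self] at h2
    exact h2
  have hx : ∀ t, x3 (t + W) = x3 t + x3 W := by
    intro t
    have h := is_const_of_deriv_eq_zero hdiff hz t 0
    simp only [zero_add, hx30, sub_zero] at h
    linarith
  have e : v + 2 * W = v + W + W := by ring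
  have hb2 : b (v + 2 * W) = b v + 2 * π := by
    rw [e, hbW, hbW]; ring
  have hx2 : x3 (v + 2 * W) = 2 * x3 W + x3 v := by
    rw [e, hx, hx]; ring
  have hd2 : deriv x3 (v + 2 * W) = deriv x3 v := by
    rw [e, hd, hd]
  simp only [e2Mul, helicoidX, helicoidX1, helicoidX2, hb2, hx2, hd2, Real.cos_add_two_pi,
    Real.sin_add_two_pi, Prod.mk.injEq, Real.cos_add (2 * x3 W), Real.sin_add (2 * x3 W)]
  refine ⟨by ring, by ring, trivial⟩
end

section
/- For K ∈ (0,1) define P(K) = ∫₀^π 2·λ₁·λ₂·K / (√(λ₁² − K·(λ₁²·cos² w + λ₂²·sin² w)) · (λ₁ + √(λ₁² − K·(λ₁²·cos² w + λ₂²·sin² w)))) dw. Then P is strictly increasing on (0,1), and for every T > 0 there exists a unique K ∈ (0,1) with P(K) = T. -/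
open Real

/-- The vertical period `2 x₃(W)` of the helicoid of parameter `K`. -/
noncomputable def helicoidPeriod (l1 l2 K : ℝ) : ℝ :=
  ∫ w in (0 : ℝ)..π,
    2 * l1 * l2 * K /
      (Real.sqrt (l1 ^ 2 - K * (l1 ^ 2 * Real.cos w ^ 2 + l2 ^ 2 * Real.sin w ^ 2)) *
        (l1 + Real.sqrt (l1 ^ 2 - K * (l1 ^ 2 * Real.cos w ^ 2 + l2 ^ 2 * Real.sin w ^ 2))))

lemma hp_D_pos (l1 l2 : ℝ) (hl : l1 ≥ l2) (hl2 : l2 > 0) (K : ℝ) (hK : K ∈ Set.Ico (0:ℝ) 1) (w : ℝ) :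
    0 < l1 ^ 2 - K * (l1 ^ 2 * Real.cos w ^ 2 + l2 ^ 2 * Real.sin w ^ 2) := by
  have h1 : l2 ^ 2 ≤ l1 ^ 2 := by gcongr
  have h2 : l1 ^ 2 * Real.cos w ^ 2 + l2 ^ 2 * Real.sin w ^ 2 ≤ l1 ^ 2 := by
    rw [Real.cos_sq']
    nlinarith [sq_nonneg (Real.sin w)]
  have h3 : 0 < l1 ^ 2 := by nlinarith
  have h4 := mul_le_mul_of_nonneg_left h2 hK.1
  nlinarith [hK.2]

lemma hp_cont (l1 l2 : ℝ) (hl : l1 ≥ l2) (hl2 : l2 > 0) :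
    Continuous (fun p : Set.Ico (0:ℝ) 1 × ℝ => 2 * l1 * l2 * (p.1 : ℝ) /
      (Real.sqrt (l1 ^ 2 - p.1 * (l1 ^ 2 * Real.cos p.2 ^ 2 + l2 ^ 2 * Real.sin p.2 ^ 2)) *
        (l1 + Real.sqrt (l1 ^ 2 - p.1 * (l1 ^ 2 * Real.cos p.2 ^ 2 + l2 ^ 2 * Real.sin p.2 ^ 2))))) := by
  apply Continuous.div
  · fun_prop
  · fun_prop
  · intro p
    have := Real.sqrt_pos.2 (hp_D_pos l1 l2 hl hl2 p.1 p.1.2 p.2)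
    have : 0 < l1 := by linarith
    positivity

lemma hp_cont' (l1 l2 : ℝ) (hl : l1 ≥ l2) (hl2 : l2 > 0) (K : ℝ) (hK : K ∈ Set.Ico (0:ℝ) 1) :
    Continuous (fun w : ℝ => 2 * l1 * l2 * K /
      (Real.sqrt (l1 ^ 2 - K * (l1 ^ 2 * Real.cos w ^ 2 + l2 ^ 2 * Real.sin w ^ 2)) *
        (l1 + Real.sqrt (l1 ^ 2 - K * (l1 ^ 2 * Real.cos w ^ 2 + l2 ^ 2 * Real.sin w ^ 2))))) :=
  (hp_cont l1 l2 hl hl2).comp (Continuous.prodMk_right (⟨K, hK⟩ : Set.Ico (0:ℝ) 1))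

lemma hp_contOn (l1 l2 : ℝ) (hl : l1 ≥ l2) (hl2 : l2 > 0) :
    ContinuousOn (helicoidPeriod l1 l2) (Set.Ico 0 1) := by
  rw [continuousOn_iff_continuous_domRestrict]
  exact intervalIntegral.continuous_parametric_intervalIntegral_of_continuous' 
    (f := fun (K : Set.Ico (0:ℝ) 1) w => 2 * l1 * l2 * (K : ℝ) /
      (Real.sqrt (l1 ^ 2 - K * (l1 ^ 2 * Real.cos w ^ 2 + l2 ^ 2 * Real.sin w ^ 2)) *
        (l1 + Real.sqrt (l1 ^ 2 - K * (l1 ^ 2 * Real.cos w ^ 2 + l2 ^ 2 * Real.sin w ^ 2)))))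
    (hp_cont l1 l2 hl hl2) 0 π

lemma hp_mono (l1 l2 : ℝ) (hl : l1 ≥ l2) (hl2 : l2 > 0) :
    StrictMonoOn (helicoidPeriod l1 l2) (Set.Ico 0 1) := by
  intro a ha b hb hab
  have h1 : 0 < l1 := by linarith
  have key : ∀ w : ℝ, 2 * l1 * l2 * a /
      (Real.sqrt (l1 ^ 2 - a * (l1 ^ 2 * Real.cos w ^ 2 + l2 ^ 2 * Real.sin w ^ 2)) *
        (l1 + Real.sqrt (l1 ^ 2 - a * (l1 ^ 2 * Real.cos w ^ 2 + l2 ^ 2 * Real.sin w ^ 2)))) < 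
      2 * l1 * l2 * b /
      (Real.sqrt (l1 ^ 2 - b * (l1 ^ 2 * Real.cos w ^ 2 + l2 ^ 2 * Real.sin w ^ 2)) *
        (l1 + Real.sqrt (l1 ^ 2 - b * (l1 ^ 2 * Real.cos w ^ 2 + l2 ^ 2 * Real.sin w ^ 2)))) := by
    intro w
    have := Real.sqrt_pos.2 (hp_D_pos l1 l2 hl hl2 b hb w)
    have hb0 : 0 < b := ha.1.trans_lt hab
    apply div_lt_div₀
    · gcongr
    · gcongr
    · positivity
    · positivity
  unfold helicoidPeriod
  exact intervalIntegral.integral_lt_integral_of_continuousOn_of_le_of_exists_lt Real.pi_pos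
    (hp_cont' l1 l2 hl hl2 a ha).continuousOn (hp_cont' l1 l2 hl hl2 b hb).continuousOn
    (fun w _ => (key w).le) ⟨0, ⟨le_rfl, Real.pi_pos.le⟩, key 0⟩

lemma hp_large (l1 l2 : ℝ) (hl : l1 ≥ l2) (hl2 : l2 > 0) (T : ℝ) (hT : 0 < T) :
    ∃ K ∈ Set.Ico (0:ℝ) 1, T ≤ helicoidPeriod l1 l2 K := by
  have h1 : 0 < l1 := by linarith
  obtain ⟨e, he0, he1, heT⟩ : ∃ e : ℝ, 0 < e ∧ e ≤ 1/2 ∧ 2 * l1 / l2 * T ≤ Real.log (1 / e) := by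
    refine ⟨Real.exp (-(2 * l1 / l2 * T)) / 2, by positivity, ?_, ?_⟩
    · have : Real.exp (-(2 * l1 / l2 * T)) ≤ 1 := by
        rw [Real.exp_le_one_iff]
        have : 0 < 2 * l1 / l2 * T := by positivity
        linarith
      linarith
    · rw [one_div, Real.log_inv, Real.log_div (by positivity) (by norm_num), Real.log_exp]
      have := Real.log_pos (x := 2) (by norm_num)
      linarith
  have hK : (1 - e ^ 2) ∈ Set.Ico (0:ℝ) 1 := ⟨by nlinarith, by nlinarith⟩
  refine ⟨1 - e ^ 2, hK, ?_⟩
  have hint : ∫ w in (0:ℝ)..π, l2 / (2 * l1) * (1 / (e + w)) = 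
      l2 / (2 * l1) * Real.log ((e + π) / e) := by
    rw [intervalIntegral.integral_const_mul,
      intervalIntegral.integral_comp_add_left (fun x => 1 / x), 
      integral_one_div_of_pos (by linarith) (by linarith [Real.pi_pos])]
    simp
  have hlog : Real.log (1 / e) ≤ Real.log ((e + π) / e) := by
    apply Real.log_le_log (by positivity)
    gcongr
    linarith [Real.pi_gt_three]
  calc T = l2 / (2 * l1) * (2 * l1 / l2 * T) := by field_simp
    _ ≤ l2 / (2 * l1) * Real.log ((e + π) / e) := by gcongr; linarith
    _ = _ := hint.symm
    _ ≤ _ := ?_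
  unfold helicoidPeriod
  apply intervalIntegral.integral_mono_on Real.pi_pos.le
  · apply ContinuousOn.intervalIntegrable
    rw [Set.uIcc_of_le Real.pi_pos.le]
    apply ContinuousOn.mul continuousOn_const
    apply ContinuousOn.div continuousOn_const (by fun_prop)
    intro x hx
    have := hx.1
    positivity
  · exact (hp_cont' l1 l2 hl hl2 _ hK).intervalIntegrable _ _
  · intro w hw
    have hw0 := hw.1
    have hD := hp_D_pos l1 l2 hl hl2 _ hK w
    set D := l1 ^ 2 - (1 - e ^ 2) * (l1 ^ 2 * Real.cos w ^ 2 + l2 ^ 2 * Real.sin w ^ 2) with hDd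
    have hs := Real.sqrt_pos.2 hD
    have hg : 0 ≤ l1 ^ 2 * Real.cos w ^ 2 + l2 ^ 2 * Real.sin w ^ 2 := by positivity
    have hs1 : √D ≤ l1 := by
      rw [Real.sqrt_le_left h1.le]
      have := mul_nonneg hK.1 hg
      linarith
    have hs2 : √D ≤ l1 * (e + w) := by
      rw [Real.sqrt_le_left (by positivity)]
      have hsin : Real.sin w ^ 2 ≤ w ^ 2 := sq_le_sq.2 Real.abs_sin_le_abs
      have h5 : 0 ≤ l2 ^ 2 * Real.sin w ^ 2 := by positivity
      have h6 := mul_nonneg hK.1 h5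
      have h7 : D ≤ l1 ^ 2 * (1 - (1 - e ^ 2) * (1 - Real.sin w ^ 2)) := by
        rw [hDd, Real.cos_sq']; linarith
      refine h7.trans ?_
      rw [mul_pow]
      gcongr
      have : 0 ≤ e ^ 2 * Real.sin w ^ 2 := by positivity
      have : 0 ≤ e * w := by positivity
      nlinarith
    calc l2 / (2 * l1) * (1 / (e + w)) = 2 * l1 * l2 * (1/2) / ((l1 * (e + w)) * (l1 + l1)) := by
          field_simp; try ring
      _ ≤ _ := by
          apply div_le_div₀
          · have := hK.1
            positivity
          · gcongr
            nlinarith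
          · positivity
          · gcongr

theorem helicoidPeriod_strictMono_and_surjective
    (l1 l2 : ℝ) (hl : l1 ≥ l2) (hl2 : l2 > 0) :
    StrictMonoOn (helicoidPeriod l1 l2) (Set.Ioo 0 1) ∧
    ∀ T > 0, ∃! K, K ∈ Set.Ioo (0 : ℝ) 1 ∧ helicoidPeriod l1 l2 K = T := by
  have hm := (hp_mono l1 l2 hl hl2).mono Set.Ioo_subset_Ico_self
  refine ⟨hm, fun T hT => ?_⟩
  obtain ⟨K, hK, hKT⟩ := hp_large l1 l2 hl hl2 T hT
  have h0 : helicoidPeriod l1 l2 0 = 0 := by simp [helicoidPeriod]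
  obtain ⟨c, hc, hcT⟩ := intermediate_value_Icc hK.1
    ((hp_contOn l1 l2 hl hl2).mono (fun x hx => ⟨hx.1, hx.2.trans_lt hK.2⟩)) 
    (show T ∈ Set.Icc _ _ from ⟨by rw [h0]; exact hT.le, hKT⟩)
  have hc0 : c ≠ 0 := by
    rintro rfl
    rw [h0] at hcT
    exact hT.ne hcT
  have hcI : c ∈ Set.Ioo (0:ℝ) 1 := ⟨lt_of_le_of_ne hc.1 hc0.symm, hc.2.trans_lt hK.2⟩
  exact ⟨c, ⟨hcI, hcT⟩, fun y hy => hm.injOn hy.1 hcI (hy.2.trans hcT.symm)⟩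
end

section
/- Let λ₁ ≥ λ₂ > 0, c > 0 and θ ∈ ℝ with |θ| < θ_c⁺, where θ_c⁺ = π if c > √2·λ₁ and θ_c⁺ = arccos(1 − c²/λ₁²) if 0 < c ≤ √2·λ₁. Then for every B ∈ [λ₂², λ₁²] one has c² + 2·cos θ·B − (sin²θ/c²)·B² > 0. -/
open Real

/-- The critical angle `θ_c⁺`. -/
noncomputable def thetaPlus (l1 c : ℝ) : ℝ :=
  if c > Real.sqrt 2 * l1 then π else Real.arccos (1 - c ^ 2 / l1 ^ 2)

theorem catenoid_P_positive
    (l1 l2 c θ : ℝ) (hl : l1 ≥ l2) (hl2 : l2 > 0) (hc : c > 0)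
    (hθ : |θ| < thetaPlus l1 c) :
    ∀ B ∈ Set.Icc (l2 ^ 2) (l1 ^ 2),
      c ^ 2 + 2 * Real.cos θ * B - (Real.sin θ ^ 2 / c ^ 2) * B ^ 2 > 0 := by
  intro B hB
  obtain ⟨hB1, hB2⟩ := hB
  have hl1 : 0 < l1 := lt_of_lt_of_le hl2 hl
  have hBpos : 0 < B := lt_of_lt_of_le (by positivity) hB1
  have hc2 : 0 < c ^ 2 := by positivity
  have hle : Real.cos θ ≤ 1 := Real.cos_le_one θ
  have hge : -1 ≤ Real.cos θ := Real.neg_one_le_cos θ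
  have key : l1 ^ 2 * (1 - Real.cos θ) < c ^ 2 := by
    unfold thetaPlus at hθ
    split_ifs at hθ with h
    · have h2 : (Real.sqrt 2 * l1) ^ 2 < c ^ 2 :=
        pow_lt_pow_left₀ h (by positivity) (by norm_num)
      rw [mul_pow, Real.sq_sqrt (by norm_num)] at h2
      nlinarith [sq_nonneg l1]
    · have h1 : c ≤ Real.sqrt 2 * l1 := not_lt.mp h
      have h2 : c ^ 2 ≤ (Real.sqrt 2 * l1) ^ 2 := pow_le_pow_left₀ hc.le h1 2
      rw [mul_pow, Real.sq_sqrt (by norm_num)] at h2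
      have h3 : c ^ 2 / l1 ^ 2 ≤ 2 := by
        rw [div_le_iff₀ (by positivity)]; exact h2
      have h4 : 0 < c ^ 2 / l1 ^ 2 := by positivity
      have h5 := Real.cos_lt_cos_of_nonneg_of_le_pi (abs_nonneg θ) (Real.arccos_le_pi _) hθ
      rw [Real.cos_arccos (by linarith) (by linarith), Real.cos_abs] at h5
      have h6 : 1 - Real.cos θ < c ^ 2 / l1 ^ 2 := by linarith
      rw [lt_div_iff₀ (by positivity)] at h6
      linarith
  have f1 : 0 < c ^ 2 - B * (1 - Real.cos θ) := by
    have := mul_le_mul_of_nonneg_right hB2 (sub_nonneg.mpr hle)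
    linarith
  have f2 : 0 < c ^ 2 + B * (1 + Real.cos θ) := by
    have : 0 ≤ B * (1 + Real.cos θ) := mul_nonneg hBpos.le (by linarith)
    linarith
  have e : c ^ 2 + 2 * Real.cos θ * B - (Real.sin θ ^ 2 / c ^ 2) * B ^ 2
      = (c ^ 2 - B * (1 - Real.cos θ)) * (c ^ 2 + B * (1 + Real.cos θ)) / c ^ 2 := by
    rw [Real.sin_sq]
    field_simp
    ring
  rw [e]
  exact div_pos (mul_pos f1 f2) hc2
end

section
/- Let φ : ℝ → ℝ be differentiable with φ(0) = 0 and φ'(u) = √(c² + 2·cos θ·B(u) − D²·B(u)²) for all u, where B(u) = λ₁²·cos²(φ u) + λ₂²·sin²(φ u) and D = sin θ / c. Then there exist constants a₁, a₂ > 0 with a₁ ≤ φ'(u) ≤ a₂ for all u, and φ is strictly increasing and is a bijection from ℝ to ℝ. -/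
open Real

/-- The quantity `B(u) = λ₁² cos²(φ u) + λ₂² sin²(φ u)`. -/
noncomputable def Bfun (l1 l2 : ℝ) (φ : ℝ → ℝ) (u : ℝ) : ℝ :=
  l1 ^ 2 * Real.cos (φ u) ^ 2 + l2 ^ 2 * Real.sin (φ u) ^ 2

theorem catenoid_phi_increasing_bijective
    (l1 l2 c θ : ℝ) (hl : l1 ≥ l2) (hl2 : l2 > 0) (hc : c > 0)
    (hθ : |θ| < thetaPlus l1 c)
    (φ : ℝ → ℝ) (hφ : Differentiable ℝ φ) (hφ0 : φ 0 = 0)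
    (hφ' : ∀ u, deriv φ u =
      Real.sqrt (c ^ 2 + 2 * Real.cos θ * Bfun l1 l2 φ u -
        (Real.sin θ / c) ^ 2 * Bfun l1 l2 φ u ^ 2)) :
    (∃ a1 > 0, ∃ a2 > 0, ∀ u, a1 ≤ deriv φ u ∧ deriv φ u ≤ a2) ∧
    StrictMono φ ∧ Function.Bijective φ := by
  have hl1 : 0 < l1 := lt_of_lt_of_le hl2 hl
  have hcos1 := Real.cos_le_one θ
  have hcos2 := Real.neg_one_le_cos θ
  have hm : 0 < c ^ 2 - (1 - Real.cos θ) * l1 ^ 2 := by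
    unfold thetaPlus at hθ
    split_ifs at hθ with h
    · have h2 : (Real.sqrt 2 * l1) ^ 2 < c ^ 2 :=
        pow_lt_pow_left₀ h (by positivity) (by norm_num)
      rw [mul_pow, Real.sq_sqrt (by norm_num)] at h2
      nlinarith [sq_nonneg l1]
    · have h1 : c ^ 2 ≤ (Real.sqrt 2 * l1) ^ 2 :=
        pow_le_pow_left₀ hc.le (not_lt.mp h) 2
      rw [mul_pow, Real.sq_sqrt (by norm_num)] at h1
      have hq : c ^ 2 / l1 ^ 2 ≤ 2 := by
        rw [div_le_iff₀ (by positivity)]; exact h1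
      have hq0 : 0 ≤ c ^ 2 / l1 ^ 2 := by positivity
      have h3 := Real.cos_lt_cos_of_nonneg_of_le_pi (abs_nonneg θ) (Real.arccos_le_pi _) hθ
      rw [Real.cos_abs, Real.cos_arccos (by linarith) (by linarith)] at h3
      have h4 : 1 - Real.cos θ < c ^ 2 / l1 ^ 2 := by linarith
      rw [lt_div_iff₀ (by positivity)] at h4
      linarith
  have hB : ∀ u, 0 ≤ Bfun l1 l2 φ u ∧ Bfun l1 l2 φ u ≤ l1 ^ 2 := by
    intro u
    unfold Bfun
    refine ⟨by positivity, ?_⟩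
    have h5 : l2 ^ 2 ≤ l1 ^ 2 := pow_le_pow_left₀ hl2.le hl 2
    nlinarith [Real.sin_sq_add_cos_sq (φ u), sq_nonneg (Real.sin (φ u))]
  have hlow : ∀ u, Real.sqrt (c ^ 2 - (1 - Real.cos θ) * l1 ^ 2) ≤ deriv φ u := by
    intro u
    rw [hφ' u]
    apply Real.sqrt_le_sqrt
    obtain ⟨hb0, hb1⟩ := hB u
    generalize Bfun l1 l2 φ u = b at hb0 hb1
    have e : c ^ 2 + 2 * Real.cos θ * b - (Real.sin θ / c) ^ 2 * b ^ 2 =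
        (c ^ 2 - (1 - Real.cos θ) * b) * (c ^ 2 + (1 + Real.cos θ) * b) / c ^ 2 := by
      rw [div_pow, Real.sin_sq]
      field_simp
      ring
    rw [e, le_div_iff₀ (by positivity)]
    apply mul_le_mul
    · nlinarith
    · nlinarith
    · positivity
    · nlinarith
  have hup : ∀ u, deriv φ u ≤ Real.sqrt (c ^ 2 + 2 * l1 ^ 2) := by
    intro u
    rw [hφ' u]
    apply Real.sqrt_le_sqrt
    obtain ⟨hb0, hb1⟩ := hB u
    have : 0 ≤ (Real.sin θ / c) ^ 2 * Bfun l1 l2 φ u ^ 2 := by positivity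
    nlinarith
  have ha := Real.sqrt_pos.mpr hm
  generalize Real.sqrt (c ^ 2 - (1 - Real.cos θ) * l1 ^ 2) = a at ha hlow
  have hmono : StrictMono φ := strictMono_of_deriv_pos fun u => ha.trans_le (hlow u)
  refine ⟨⟨a, ha, _, Real.sqrt_pos.mpr (by positivity), fun u => ⟨hlow u, hup u⟩⟩,
    hmono, hmono.injective, ?_⟩
  have key : ∀ x y, x ≤ y → a * (y - x) ≤ φ y - φ x := fun x y h =>
    mul_sub_le_image_sub_of_le_deriv hφ hlow h
  apply hφ.continuous.surjective
  · refine Filter.tendsto_atTop_mono' _ ?_ (Filter.tendsto_id.const_mul_atTop ha)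
    filter_upwards [Filter.eventually_ge_atTop 0] with x hx
    have := key 0 x hx
    simp only [id, hφ0, sub_zero] at *
    exact this
  · refine Filter.tendsto_atBot_mono' _ ?_ (Filter.tendsto_id.const_mul_atBot ha)
    filter_upwards [Filter.eventually_le_atBot 0] with x hx
    have := key x 0 hx
    simp only [id, hφ0] at *
    linarith
end

section
/- Let φ : ℝ → ℝ be differentiable with φ(0) = 0 and φ'(u) = √(c² + 2·cos θ·B(u) − D²·B(u)²) for all u, where B(u) = λ₁²·cos²(φ u) + λ₂²·sin²(φ u) and D = sin θ / c. Then: (1) φ is odd, i.e. φ(−u) = −φ(u) for all u; (2) there exists U > 0 such that φ(u + U) = φ(u) + π for all u ∈ ℝ; (3) for this U, φ(k·U) = k·π for every integer k, and φ((2k+1)·U/2) = (2k+1)·π/2 for every integer k. -/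
open Real

lemma aux_pos (l1 l2 c θ : ℝ) (hl : l1 ≥ l2) (hl2 : l2 > 0) (hc : c > 0)
    (hθ : |θ| < thetaPlus l1 c) (x : ℝ) :
    0 < c ^ 2 + 2 * Real.cos θ * (l1 ^ 2 * Real.cos x ^ 2 + l2 ^ 2 * Real.sin x ^ 2) -
        (Real.sin θ / c) ^ 2 * (l1 ^ 2 * Real.cos x ^ 2 + l2 ^ 2 * Real.sin x ^ 2) ^ 2 := by
  have hl1 : 0 < l1 := lt_of_lt_of_le hl2 hl
  have key : l1 ^ 2 * (1 - Real.cos θ) < c ^ 2 := by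
    unfold thetaPlus at hθ
    have hcos := Real.neg_one_le_cos θ
    split_ifs at hθ with h
    · have h2 : (Real.sqrt 2 * l1) ^ 2 < c ^ 2 := by
        apply pow_lt_pow_left₀ h (by positivity) (by norm_num)
      rw [mul_pow, Real.sq_sqrt (by norm_num)] at h2
      nlinarith [sq_nonneg l1]
    · push Not at h
      have h2 : c ^ 2 ≤ (Real.sqrt 2 * l1) ^ 2 := pow_le_pow_left₀ hc.le h 2
      rw [mul_pow, Real.sq_sqrt (by norm_num)] at h2
      have h3 : c ^ 2 / l1 ^ 2 ≤ 2 := by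
        rw [div_le_iff₀ (by positivity)]; exact h2
      have h4 : 0 ≤ c ^ 2 / l1 ^ 2 := by positivity
      have h5 := Real.cos_lt_cos_of_nonneg_of_le_pi (abs_nonneg θ) (Real.arccos_le_pi _) hθ
      rw [Real.cos_arccos (by linarith) (by linarith), Real.cos_abs] at h5
      have h6 : 1 - Real.cos θ < c ^ 2 / l1 ^ 2 := by linarith
      rw [lt_div_iff₀ (by positivity)] at h6
      linarith
  set B := l1 ^ 2 * Real.cos x ^ 2 + l2 ^ 2 * Real.sin x ^ 2 with hB
  have hs := Real.sin_sq_add_cos_sq x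
  have hB0 : 0 ≤ B := by positivity
  have hB1 : B ≤ l1 ^ 2 := by
    have : l2 ^ 2 ≤ l1 ^ 2 := pow_le_pow_left₀ hl2.le hl 2
    nlinarith [sq_nonneg (Real.sin x)]
  have hm := Real.neg_one_le_cos θ
  have hp := Real.cos_le_one θ
  have e : c ^ 2 + 2 * Real.cos θ * B - (Real.sin θ / c) ^ 2 * B ^ 2
      = (c ^ 2 - B * (1 - Real.cos θ)) * (c ^ 2 + B * (1 + Real.cos θ)) / c ^ 2 := by
    have := Real.sin_sq θ
    rw [div_pow, this]
    field_simp
    ring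
  rw [e]
  have a1 : 0 < c ^ 2 - B * (1 - Real.cos θ) := by
    nlinarith
  have a2 : 0 < c ^ 2 + B * (1 + Real.cos θ) := by
    have : 0 ≤ B * (1 + Real.cos θ) := mul_nonneg hB0 (by linarith)
    positivity
  positivity

lemma aux_ode (f : ℝ → ℝ) (hf : Continuous f) (hpos : ∀ x, 0 < f x)
    (heven : ∀ x, f (-x) = f x) (hper : ∀ x, f (x + π) = f x)
    (φ : ℝ → ℝ) (hφ : Differentiable ℝ φ) (hφ0 : φ 0 = 0)
    (hφ' : ∀ u, deriv φ u = f (φ u)) :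
    (∀ u, φ (-u) = -φ u) ∧ ∃ U > 0, (∀ u, φ (u + U) = φ u + π) := by
  have hgc : Continuous (fun x => (f x)⁻¹) := hf.inv₀ (fun x => (hpos x).ne')
  obtain ⟨G, hG0, hG⟩ : ∃ G : ℝ → ℝ, G 0 = 0 ∧ ∀ x, HasDerivAt G (f x)⁻¹ x :=
    ⟨fun x => ∫ t in (0:ℝ)..x, (f t)⁻¹, by simp,
      fun x => (hgc.integral_hasStrictDerivAt 0 x).hasDerivAt⟩
  have hmono : StrictMono G := strictMono_of_deriv_pos (fun x => by
    rw [(hG x).deriv]; exact inv_pos.2 (hpos x))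
  have const : ∀ F : ℝ → ℝ, (∀ x, HasDerivAt F 0 x) → ∀ x, F x = F 0 := fun F hF x =>
    is_const_of_deriv_eq_zero (fun y => (hF y).differentiableAt) (fun y => (hF y).deriv) x 0
  have h1 : ∀ u, G (φ u) = u := by
    intro u
    have := const (fun u => G (φ u) - u) (fun x => by
      have hd := ((hG (φ x)).comp x (hφ x).hasDerivAt).sub (hasDerivAt_id x)
      rw [hφ' x, inv_mul_cancel₀ (hpos _).ne', sub_self] at hd
      exact hd) u
    simp only [hφ0, hG0] at this
    linarith
  have h2 : ∀ x, G (-x) = - G x := by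
    intro x
    have := const (fun u => G (-u) + G u) (fun x => by
      have hd := ((hG (-x)).comp x (hasDerivAt_neg x)).add (hG x)
      rw [heven x] at hd
      have e : (f x)⁻¹ * -1 + (f x)⁻¹ = 0 := by ring
      rw [e] at hd
      exact hd) x
    simp only [neg_zero, hG0] at this
    linarith
  have h3 : ∀ x, G (x + π) = G x + G π := by
    intro x
    have := const (fun u => G (u + π) - G u) (fun x => by
      have hd := ((hG (x + π)).comp_add_const x π).sub (hG x)
      rw [hper x, sub_self] at hd
      exact hd) x
    simp only [zero_add, hG0] at this
    linarith
  refine ⟨fun u => hmono.injective ?_, G π, ?_, fun u => hmono.injective ?_⟩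
  · rw [h1, h2, h1]
  · have := hmono Real.pi_pos
    rwa [hG0] at this
  · rw [h1, h3, h1]

theorem catenoid_phi_odd_quasiperiodic
    (l1 l2 c θ : ℝ) (hl : l1 ≥ l2) (hl2 : l2 > 0) (hc : c > 0)
    (hθ : |θ| < thetaPlus l1 c)
    (φ : ℝ → ℝ) (hφ : Differentiable ℝ φ) (hφ0 : φ 0 = 0)
    (hφ' : ∀ u, deriv φ u =
      Real.sqrt (c ^ 2 + 2 * Real.cos θ * Bfun l1 l2 φ u -
        (Real.sin θ / c) ^ 2 * Bfun l1 l2 φ u ^ 2)) :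
    (∀ u, φ (-u) = -φ u) ∧
    ∃ U > 0, (∀ u, φ (u + U) = φ u + π) ∧
      (∀ k : ℤ, φ (k * U) = k * π) ∧
      (∀ k : ℤ, φ ((2 * k + 1) * U / 2) = (2 * k + 1) * π / 2) := by
  obtain ⟨hodd, U, hU, hq⟩ := aux_ode
    (fun x => Real.sqrt (c ^ 2 + 2 * Real.cos θ *
        (l1 ^ 2 * Real.cos x ^ 2 + l2 ^ 2 * Real.sin x ^ 2) -
        (Real.sin θ / c) ^ 2 * (l1 ^ 2 * Real.cos x ^ 2 + l2 ^ 2 * Real.sin x ^ 2) ^ 2))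
    (by fun_prop) (fun x => Real.sqrt_pos.2 (aux_pos l1 l2 c θ hl hl2 hc hθ x))
    (fun x => by simp) (fun x => by simp) φ hφ hφ0 hφ'
  have hk : ∀ (k : ℤ) (x : ℝ), φ (x + k * U) = φ x + k * π := by
    intro k x
    induction k using Int.induction_on with
    | zero => simp
    | succ n ih =>
      have := hq (x + (n : ℤ) * U)
      rw [ih] at this
      push_cast at this ⊢
      rw [show x + ((n : ℝ) + 1) * U = x + n * U + U by ring, this]; ring
    | pred n ih =>
      have := hq (x + ((-n - 1 : ℤ) : ℝ) * U)
      rw [show x + ((-n - 1 : ℤ) : ℝ) * U + U = x + ((-n : ℤ) : ℝ) * U by push_cast; ring,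
        ih] at this
      push_cast at this ⊢
      linarith
  refine ⟨hodd, U, hU, hq, fun k => ?_, fun k => ?_⟩
  · have := hk k 0
    rwa [hφ0, zero_add, zero_add] at this
  · have h1 := hq (-(U / 2))
    rw [hodd, show -(U / 2) + U = U / 2 by ring] at h1
    have h2 := hk k (U / 2)
    rw [show (2 * (k : ℝ) + 1) * U / 2 = U / 2 + k * U by ring, h2]
    linarith
end

section
/- Let φ : ℝ → ℝ be differentiable with φ(0) = 0 and φ'(u) = √(c² + 2·cos θ·B(u) − D²·B(u)²) for all u, where B(u) = λ₁²·cos²(φ u) + λ₂²·sin²(φ u) and D = sin θ / c, and let f : ℝ → ℝ be differentiable with f(0) = 0 and f'(u) = D·B(u) for all u. Then f' and φ' are differentiable and for all u ∈ ℝ: (1) B(u)·f''(u) = −2·(λ₁² − λ₂²)·f'(u)·φ'(u)·sin(φ u)·cos(φ u); (2) B(u)·φ''(u) = (λ₁² − λ₂²)·(f'(u)² − φ'(u)² + c²)·sin(φ u)·cos(φ u). -/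
open Real

theorem catenoid_second_derivatives
    (l1 l2 c θ : ℝ) (hl : l1 ≥ l2) (hl2 : l2 > 0) (hc : c > 0)
    (hθ : |θ| < thetaPlus l1 c)
    (φ : ℝ → ℝ) (hφ : Differentiable ℝ φ) (hφ0 : φ 0 = 0)
    (hφ' : ∀ u, deriv φ u =
      Real.sqrt (c ^ 2 + 2 * Real.cos θ * Bfun l1 l2 φ u -
        (Real.sin θ / c) ^ 2 * Bfun l1 l2 φ u ^ 2))
    (f : ℝ → ℝ) (hf : Differentiable ℝ f) (hf0 : f 0 = 0)
    (hf' : ∀ u, deriv f u = (Real.sin θ / c) * Bfun l1 l2 φ u) :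
    Differentiable ℝ (deriv f) ∧ Differentiable ℝ (deriv φ) ∧
    (∀ u, Bfun l1 l2 φ u * deriv (deriv f) u =
      -2 * (l1 ^ 2 - l2 ^ 2) * deriv f u * deriv φ u * Real.sin (φ u) * Real.cos (φ u)) ∧
    (∀ u, Bfun l1 l2 φ u * deriv (deriv φ) u =
      (l1 ^ 2 - l2 ^ 2) * (deriv f u ^ 2 - deriv φ u ^ 2 + c ^ 2) *
        Real.sin (φ u) * Real.cos (φ u)) := by
  have hl1 : l1 > 0 := lt_of_lt_of_le hl2 hl
  have hcos : (1 - Real.cos θ) * l1 ^ 2 < c ^ 2 := by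
    unfold thetaPlus at hθ
    split_ifs at hθ with h
    · have h2 : (Real.sqrt 2 * l1) ^ 2 < c ^ 2 := by
        apply pow_lt_pow_left₀ h (by positivity) (by norm_num)
      rw [mul_pow, Real.sq_sqrt (by norm_num)] at h2
      nlinarith [Real.neg_one_le_cos θ, sq_nonneg l1]
    · have h1 : Real.cos (Real.arccos (1 - c ^ 2 / l1 ^ 2)) < Real.cos |θ| :=
        Real.cos_lt_cos_of_nonneg_of_le_pi (abs_nonneg θ) (Real.arccos_le_pi _) hθ
      have h2 : c ^ 2 ≤ (Real.sqrt 2 * l1) ^ 2 := by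
        apply pow_le_pow_left₀ hc.le (not_lt.mp h)
      rw [mul_pow, Real.sq_sqrt (by norm_num)] at h2
      have h3 : c ^ 2 / l1 ^ 2 ≤ 2 := by
        rw [div_le_iff₀ (by positivity)]; exact h2
      have h4 : 0 ≤ c ^ 2 / l1 ^ 2 := by positivity
      rw [Real.cos_arccos (by linarith) (by linarith), Real.cos_abs] at h1
      have h5 : 1 - Real.cos θ < c ^ 2 / l1 ^ 2 := by linarith
      rwa [lt_div_iff₀ (by positivity)] at h5
  have hB : ∀ u, 0 < Bfun l1 l2 φ u ∧ Bfun l1 l2 φ u ≤ l1 ^ 2 := by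
    intro u
    have e : Bfun l1 l2 φ u = l2 ^ 2 + (l1 ^ 2 - l2 ^ 2) * Real.cos (φ u) ^ 2 := by
      unfold Bfun
      rw [Real.sin_sq]; ring
    have h0 : 0 ≤ l1 ^ 2 - l2 ^ 2 := by nlinarith
    have h1 := Real.cos_sq_le_one (φ u)
    rw [e]
    constructor
    · positivity
    · nlinarith
  have hQ : ∀ u, 0 < c ^ 2 + 2 * Real.cos θ * Bfun l1 l2 φ u -
        (Real.sin θ / c) ^ 2 * Bfun l1 l2 φ u ^ 2 := by
    intro u
    obtain ⟨h0, h1⟩ := hB u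
    have e : c ^ 2 + 2 * Real.cos θ * Bfun l1 l2 φ u -
        (Real.sin θ / c) ^ 2 * Bfun l1 l2 φ u ^ 2 =
        (c ^ 2 - (1 - Real.cos θ) * Bfun l1 l2 φ u) *
          (c ^ 2 + (1 + Real.cos θ) * Bfun l1 l2 φ u) / c ^ 2 := by
      rw [div_pow, Real.sin_sq]; field_simp; ring
    rw [e]
    have a1 : 0 ≤ 1 - Real.cos θ := by linarith [Real.cos_le_one θ]
    have a2 : 0 ≤ 1 + Real.cos θ := by linarith [Real.neg_one_le_cos θ]
    have a3 : 0 < c ^ 2 - (1 - Real.cos θ) * Bfun l1 l2 φ u := by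
      linarith [mul_le_mul_of_nonneg_left h1 a1]
    positivity
  have hBd : ∀ u, HasDerivAt (Bfun l1 l2 φ)
      (-2 * (l1 ^ 2 - l2 ^ 2) * deriv φ u * Real.sin (φ u) * Real.cos (φ u)) u := by
    intro u
    have h := (hφ u).hasDerivAt
    have := ((h.cos.pow 2).const_mul (l1 ^ 2)).add ((h.sin.pow 2).const_mul (l2 ^ 2))
    refine this.congr_deriv ?_
    simp; ring
  have hfd : ∀ u, HasDerivAt (deriv f) ((Real.sin θ / c) *
      (-2 * (l1 ^ 2 - l2 ^ 2) * deriv φ u * Real.sin (φ u) * Real.cos (φ u))) u := by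
    intro u
    rw [show deriv f = fun u => (Real.sin θ / c) * Bfun l1 l2 φ u from funext hf']
    exact (hBd u).const_mul _
  have hφd : ∀ u, HasDerivAt (deriv φ) (-2 * (l1 ^ 2 - l2 ^ 2) *
      (Real.cos θ - (Real.sin θ / c) ^ 2 * Bfun l1 l2 φ u) *
      Real.sin (φ u) * Real.cos (φ u)) u := by
    intro u
    have h := ((((hBd u).const_mul (2 * Real.cos θ)).const_add (c ^ 2)).sub
      (((hBd u).pow 2).const_mul ((Real.sin θ / c) ^ 2))).sqrt (hQ u).ne'
    have hp : 0 < deriv φ u := by rw [hφ' u]; exact Real.sqrt_pos.mpr (hQ u)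
    have h' := h.congr_of_eventuallyEq (f₁ := deriv φ) (Filter.Eventually.of_forall hφ')
    refine h'.congr_deriv ?_
    simp only [Pi.sub_apply, Pi.pow_apply]
    rw [← hφ' u]
    field_simp
    simp
    ring
  refine ⟨fun u => (hfd u).differentiableAt, fun u => (hφd u).differentiableAt, ?_, ?_⟩
  · intro u
    rw [(hfd u).deriv, hf' u]; ring
  · intro u
    have hs := Real.sq_sqrt (hQ u).le
    rw [← hφ' u] at hs
    rw [(hφd u).deriv, hs, hf' u]; ring
end

section
/- Let φ : ℝ → ℝ be differentiable with φ(0) = 0 and φ'(u) = √(c² + 2·cos θ·B(u) − D²·B(u)²) for all u, where B(u) = λ₁²·cos²(φ u) + λ₂²·sin²(φ u) and D = sin θ / c, let U > 0 satisfy φ(u + U) = φ(u) + π for all u, and let f : ℝ → ℝ be differentiable with f(0) = 0 and f'(u) = D·B(u) for all u. Then: (1) f is odd, i.e. f(−u) = −f(u) for all u; (2) f(u + U) = f(u) + f(U) for all u ∈ ℝ; (3) f(k·U) = k·f(U) for every integer k. -/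
open Real

theorem aux_cos (l1 c θ : ℝ) (h1 : 0 < l1) (hc : 0 < c) (hθ : |θ| < thetaPlus l1 c) :
    (1 - Real.cos θ) * l1 ^ 2 < c ^ 2 := by
  unfold thetaPlus at hθ
  split_ifs at hθ with h
  · have h2 : (Real.sqrt 2 * l1) ^ 2 < c ^ 2 := by
      apply pow_lt_pow_left₀ h (by positivity) (by norm_num)
    rw [mul_pow, Real.sq_sqrt (by norm_num)] at h2
    nlinarith [Real.neg_one_le_cos θ, sq_nonneg l1]
  · push Not at h
    have h2 : c ^ 2 ≤ (Real.sqrt 2 * l1) ^ 2 := pow_le_pow_left₀ hc.le h 2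
    rw [mul_pow, Real.sq_sqrt (by norm_num)] at h2
    have hl : 0 < l1 ^ 2 := by positivity
    have h3 : c ^ 2 / l1 ^ 2 ≤ 2 := by rw [div_le_iff₀ hl]; exact h2
    have h4 : 0 ≤ c ^ 2 / l1 ^ 2 := by positivity
    have h5 := Real.cos_lt_cos_of_nonneg_of_le_pi (abs_nonneg θ) (Real.arccos_le_pi _) hθ
    rw [Real.cos_abs, Real.cos_arccos (by linarith) (by linarith)] at h5
    have h6 : 1 - Real.cos θ < c ^ 2 / l1 ^ 2 := by linarith
    rwa [lt_div_iff₀ hl] at h6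

theorem aux_pos_s11 (c θ m B : ℝ) (hc : 0 < c) (hB : 0 < B) (hBm : B ≤ m)
    (h : (1 - Real.cos θ) * m < c ^ 2) :
    0 < c ^ 2 + 2 * Real.cos θ * B - (Real.sin θ / c) ^ 2 * B ^ 2 := by
  have e : c ^ 2 + 2 * Real.cos θ * B - (Real.sin θ / c) ^ 2 * B ^ 2
      = (c ^ 2 - (1 - Real.cos θ) * B) * (c ^ 2 + (1 + Real.cos θ) * B) / c ^ 2 := by
    rw [div_pow, Real.sin_sq]
    field_simp
    ring
  rw [e]
  have h1 : 0 ≤ 1 - Real.cos θ := by linarith [Real.cos_le_one θ]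
  have h2 : 0 ≤ 1 + Real.cos θ := by linarith [Real.neg_one_le_cos θ]
  have h3 := mul_le_mul_of_nonneg_left hBm h1
  have h4 : 0 < c ^ 2 - (1 - Real.cos θ) * B := by linarith
  positivity

theorem aux_odd (G : ℝ → ℝ) (hG : Continuous G) (hpos : ∀ x, 0 < G x)
    (heven : ∀ x, G (-x) = G x) (φ : ℝ → ℝ) (hφ : Differentiable ℝ φ) (h0 : φ 0 = 0)
    (h : ∀ u, deriv φ u = G (φ u)) (u : ℝ) : φ (-u) = -φ u := by
  have hc : Continuous fun x => (G x)⁻¹ := hG.inv₀ fun x => (hpos x).ne'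
  let H : ℝ → ℝ := fun x => ∫ t in (0:ℝ)..x, (G t)⁻¹
  have hH : ∀ x, HasDerivAt H (G x)⁻¹ x := fun x =>
    (hc.integral_hasStrictDerivAt 0 x).hasDerivAt
  have hmono : StrictMono H := strictMono_of_deriv_pos fun x => by
    rw [(hH x).deriv]; exact inv_pos.2 (hpos x)
  have hodd : ∀ x, H (-x) = - H x := by
    intro x
    have := intervalIntegral.integral_comp_neg (a := 0) (b := x) (fun t => (G t)⁻¹)
    simp only [heven, neg_zero] at this
    simp only [H]
    rw [this, intervalIntegral.integral_symm]
  have hlin : ∀ u, H (φ u) = u := by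
    have hd : ∀ u, HasDerivAt (fun u => H (φ u) - u) 0 u := by
      intro u
      have h1 := ((hH (φ u)).comp u (hφ u).hasDerivAt).sub (hasDerivAt_id u)
      rw [h u, inv_mul_cancel₀ (hpos _).ne', sub_self] at h1
      exact h1
    intro u
    have := is_const_of_deriv_eq_zero (fun u => (hd u).differentiableAt)
      (fun u => (hd u).deriv) u 0
    simp only [h0, H, intervalIntegral.integral_same] at this
    simp only [H]
    linarith
  apply hmono.injective
  rw [hodd, hlin, hlin]

theorem catenoid_f_odd_quasiperiodic
    (l1 l2 c θ : ℝ) (hl : l1 ≥ l2) (hl2 : l2 > 0) (hc : c > 0)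
    (hθ : |θ| < thetaPlus l1 c)
    (φ : ℝ → ℝ) (hφ : Differentiable ℝ φ) (hφ0 : φ 0 = 0)
    (hφ' : ∀ u, deriv φ u =
      Real.sqrt (c ^ 2 + 2 * Real.cos θ * Bfun l1 l2 φ u -
        (Real.sin θ / c) ^ 2 * Bfun l1 l2 φ u ^ 2))
    (U : ℝ) (hU : U > 0) (hφU : ∀ u, φ (u + U) = φ u + π)
    (f : ℝ → ℝ) (hf : Differentiable ℝ f) (hf0 : f 0 = 0)
    (hf' : ∀ u, deriv f u = (Real.sin θ / c) * Bfun l1 l2 φ u) :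
    (∀ u, f (-u) = -f u) ∧
    (∀ u, f (u + U) = f u + f U) ∧
    (∀ k : ℤ, f (k * U) = k * f U) := by
  have h1 : 0 < l1 := lt_of_lt_of_le hl2 hl
  have hcos := aux_cos l1 c θ h1 hc hθ
  have hodd : ∀ u, φ (-u) = -φ u := by
    apply aux_odd (fun x => Real.sqrt (c ^ 2 + 2 * Real.cos θ * Bfun l1 l2 id x -
        (Real.sin θ / c) ^ 2 * Bfun l1 l2 id x ^ 2)) _ _ _ φ hφ hφ0
    · intro u; rw [hφ' u]; simp [Bfun]
    · unfold Bfun; simp only [id]; fun_prop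
    · intro x
      have hs := Real.sin_sq_add_cos_sq x
      have h12 : l2 ^ 2 ≤ l1 ^ 2 := pow_le_pow_left₀ hl2.le hl 2
      have h22 : 0 < l2 ^ 2 := by positivity
      apply Real.sqrt_pos.2
      apply aux_pos_s11 c θ (l1 ^ 2) _ hc _ _ hcos
      · simp only [Bfun, id]
        nlinarith [sq_nonneg (Real.cos x), sq_nonneg (Real.sin x)]
      · simp only [Bfun, id]
        nlinarith [sq_nonneg (Real.cos x), sq_nonneg (Real.sin x)]
    · intro x; simp [Bfun]
  have hfd : ∀ u, HasDerivAt f ((Real.sin θ / c) * Bfun l1 l2 φ u) u := fun u => by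
    rw [← hf' u]; exact (hf u).hasDerivAt
  have hper : ∀ u, f (u + U) = f u + f U := by
    have hd : ∀ u, HasDerivAt (fun u => f (u + U) - f u) 0 u := by
      intro u
      have := ((hfd (u + U)).comp_add_const u U).sub (hfd u)
      have e : Bfun l1 l2 φ (u + U) = Bfun l1 l2 φ u := by
        simp [Bfun, hφU, Real.cos_add_pi, Real.sin_add_pi]
      rw [e, sub_self] at this
      exact this
    intro u
    have := is_const_of_deriv_eq_zero (fun u => (hd u).differentiableAt)
      (fun u => (hd u).deriv) u 0
    simp only [zero_add, hf0] at this
    linarith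
  refine ⟨?_, hper, ?_⟩
  · have hd : ∀ u, HasDerivAt (fun u => f (-u) + f u) 0 u := by
      intro u
      have := ((hfd (-u)).comp u (hasDerivAt_neg u)).add (hfd u)
      have e : Bfun l1 l2 φ (-u) = Bfun l1 l2 φ u := by
        simp [Bfun, hodd]
      rw [e, mul_neg_one, neg_add_cancel] at this
      exact this
    intro u
    have := is_const_of_deriv_eq_zero (fun u => (hd u).differentiableAt)
      (fun u => (hd u).deriv) u 0
    simp only [neg_zero, hf0] at this
    linarith
  · intro k
    induction k using Int.induction_on with
    | zero => simp [hf0]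
    | succ n ih =>
      have := hper (((n : ℤ) : ℝ) * U)
      push_cast at *
      rw [add_mul, one_mul, this, ih]; ring
    | pred n ih =>
      have := hper (((-(n : ℤ) - 1 : ℤ) : ℝ) * U)
      push_cast at *
      rw [show (-(n:ℝ) - 1) * U + U = -(n:ℝ) * U by ring, ih] at this
      linarith
end

section
/- Let φ : ℝ → ℝ be differentiable with φ(0) = 0 and φ'(u) = √(c² + 2·cos θ·B(u) − D²·B(u)²) for all u, where B(u) = λ₁²·cos²(φ u) + λ₂²·sin²(φ u) and D = sin θ / c, and let f : ℝ → ℝ be differentiable with f(0) = 0 and f'(u) = D·B(u). Define g : ℝ × ℝ → ℂ by g(u,v) = exp(f(u) + c·v)·(cos(φ u) + i·sin(φ u)), let g_u, g_v denote the partial derivatives of g, set g_z = (g_u − i·g_v)/2 and g_z̄ = (g_u + i·g_v)/2, and set g_{zz̄} = (g_{uu} + g_{vv})/4. Then at every point (u,v): (1) g_{zz̄}·[λ₁²·(g + conj g)² − λ₂²·(g − conj g)²] = 2·[λ₁²·(g + conj g) − λ₂²·(g − conj g)]·g_z·g_z̄; and (2) g_z·conj(g_z̄) = (1/8)·(cos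 θ − i·sin θ)·[λ₁²·(g + conj g)² − λ₂²·(g − conj g)²]. -/
open Real Complex

/-- The Gauss map `g(u+iv) = e^{f(u)+cv} e^{i φ(u)}` of the catenoidal surface. -/
noncomputable def catGauss (c : ℝ) (f φ : ℝ → ℝ) (u v : ℝ) : ℂ :=
  (Real.exp (f u + c * v) : ℂ) * ((Real.cos (φ u) : ℂ) + Complex.I * (Real.sin (φ u) : ℂ))

/-- Partial derivative in `u`. -/
noncomputable def catGauss_u (c : ℝ) (f φ : ℝ → ℝ) (u v : ℝ) : ℂ :=
  deriv (fun t => catGauss c f φ t v) u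

/-- Partial derivative in `v`. -/
noncomputable def catGauss_v (c : ℝ) (f φ : ℝ → ℝ) (u v : ℝ) : ℂ :=
  deriv (fun t => catGauss c f φ u t) v

/-- Second partial derivative in `u`. -/
noncomputable def catGauss_uu (c : ℝ) (f φ : ℝ → ℝ) (u v : ℝ) : ℂ :=
  deriv (fun t => catGauss_u c f φ t v) u

/-- Second partial derivative in `v`. -/
noncomputable def catGauss_vv (c : ℝ) (f φ : ℝ → ℝ) (u v : ℝ) : ℂ :=
  deriv (fun t => catGauss_v c f φ u t) v

/-- Wirtinger derivative `g_z = (g_u - i g_v)/2`. -/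
noncomputable def catGauss_z (c : ℝ) (f φ : ℝ → ℝ) (u v : ℝ) : ℂ :=
  (catGauss_u c f φ u v - Complex.I * catGauss_v c f φ u v) / 2

/-- Wirtinger derivative `g_z̄ = (g_u + i g_v)/2`. -/
noncomputable def catGauss_zbar (c : ℝ) (f φ : ℝ → ℝ) (u v : ℝ) : ℂ :=
  (catGauss_u c f φ u v + Complex.I * catGauss_v c f φ u v) / 2

/-- Mixed Wirtinger derivative `g_{z z̄} = (g_{uu} + g_{vv})/4`. -/
noncomputable def catGauss_zzbar (c : ℝ) (f φ : ℝ → ℝ) (u v : ℝ) : ℂ :=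
  (catGauss_uu c f φ u v + catGauss_vv c f φ u v) / 4

theorem radicand_pos
    (l1 l2 c θ : ℝ) (hl : l1 ≥ l2) (hl2 : l2 > 0) (hc : c > 0)
    (hθ : |θ| < thetaPlus l1 c) (φ : ℝ → ℝ) (u : ℝ) :
    0 < c ^ 2 + 2 * Real.cos θ * Bfun l1 l2 φ u -
        (Real.sin θ / c) ^ 2 * Bfun l1 l2 φ u ^ 2 := by
  have hl1 : 0 < l1 := lt_of_lt_of_le hl2 hl
  have hsc := Real.sin_sq_add_cos_sq (φ u)
  have hll : l2 ^ 2 ≤ l1 ^ 2 := by gcongr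
  have hB0 : 0 < Bfun l1 l2 φ u := by
    unfold Bfun
    have : 0 < l2 ^ 2 := by positivity
    nlinarith [sq_nonneg (Real.cos (φ u)), sq_nonneg (Real.sin (φ u))]
  have hB1 : Bfun l1 l2 φ u ≤ l1 ^ 2 := by
    unfold Bfun
    nlinarith [sq_nonneg (Real.cos (φ u)), sq_nonneg (Real.sin (φ u))]
  have hc1 : l1 ^ 2 * (1 - Real.cos θ) < c ^ 2 := by
    unfold thetaPlus at hθ
    split_ifs at hθ with h
    · have h2 : (Real.sqrt 2 * l1) ^ 2 < c ^ 2 := by gcongr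
      rw [mul_pow, Real.sq_sqrt (by norm_num)] at h2
      nlinarith [Real.neg_one_le_cos θ, sq_nonneg l1]
    · push Not at h
      have h2 : c ^ 2 ≤ (Real.sqrt 2 * l1) ^ 2 := by gcongr
      rw [mul_pow, Real.sq_sqrt (by norm_num)] at h2
      have h3 : c ^ 2 / l1 ^ 2 ≤ 2 := by
        rw [div_le_iff₀ (by positivity)]; exact h2
      have h4 : 0 < c ^ 2 / l1 ^ 2 := by positivity
      have h5 := Real.cos_lt_cos_of_nonneg_of_le_pi (abs_nonneg θ) (Real.arccos_le_pi _) hθ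
      rw [Real.cos_abs, Real.cos_arccos (by linarith) (by linarith)] at h5
      have h6 : 1 - Real.cos θ < c ^ 2 / l1 ^ 2 := by linarith
      rw [lt_div_iff₀ (by positivity)] at h6
      linarith
  generalize Bfun l1 l2 φ u = B at *
  have e : c ^ 2 + 2 * Real.cos θ * B - (Real.sin θ / c) ^ 2 * B ^ 2
      = (c ^ 2 + (1 + Real.cos θ) * B) * (c ^ 2 - (1 - Real.cos θ) * B) / c ^ 2 := by
    field_simp
    rw [Real.sin_sq]
    ring
  rw [e]
  have h1 : 0 ≤ 1 + Real.cos θ := by linarith [Real.neg_one_le_cos θ]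
  have h2 : 0 ≤ 1 - Real.cos θ := by linarith [Real.cos_le_one θ]
  have h3 : 0 < c ^ 2 - (1 - Real.cos θ) * B := by nlinarith
  positivity

theorem hasDeriv_u (c : ℝ) (f φ : ℝ → ℝ) (u v p q : ℝ) (hf : HasDerivAt f p u)
    (hφ : HasDerivAt φ q u) :
    HasDerivAt (fun t => catGauss c f φ t v)
      (catGauss c f φ u v * ((p : ℂ) + Complex.I * (q : ℂ))) u := by
  have h1 := ((hf.add_const (c * v)).exp).ofReal_comp
  have h2 := (hφ.cos).ofReal_comp
  have h3 := ((hφ.sin).ofReal_comp).const_mul Complex.I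
  have h := h1.mul (h2.add h3)
  refine h.congr_deriv ?_
  simp only [catGauss, Pi.add_apply]
  push_cast
  linear_combination (-(Complex.exp (f u + c * v) * Complex.sin (φ u) * q)) * Complex.I_sq

theorem hasDeriv_v (c : ℝ) (f φ : ℝ → ℝ) (u v : ℝ) :
    HasDerivAt (fun t => catGauss c f φ u t) (catGauss c f φ u v * (c : ℂ)) v := by
  have h0 : HasDerivAt (fun t : ℝ => f u + c * t) c v := by
    simpa using ((hasDerivAt_id v).const_mul c).const_add (f u)
  have h := (h0.exp.ofReal_comp).mul_const
    ((Real.cos (φ u) : ℂ) + Complex.I * (Real.sin (φ u) : ℂ))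
  refine h.congr_deriv ?_
  simp only [catGauss]
  push_cast
  ring

theorem catGauss_harmonic_and_Hopf
    (l1 l2 c θ : ℝ) (hl : l1 ≥ l2) (hl2 : l2 > 0) (hc : c > 0)
    (hθ : |θ| < thetaPlus l1 c)
    (φ : ℝ → ℝ) (hφ : Differentiable ℝ φ) (hφ0 : φ 0 = 0)
    (hφ' : ∀ u, deriv φ u =
      Real.sqrt (c ^ 2 + 2 * Real.cos θ * Bfun l1 l2 φ u -
        (Real.sin θ / c) ^ 2 * Bfun l1 l2 φ u ^ 2))
    (f : ℝ → ℝ) (hf : Differentiable ℝ f) (hf0 : f 0 = 0)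
    (hf' : ∀ u, deriv f u = (Real.sin θ / c) * Bfun l1 l2 φ u) :
    ∀ u v : ℝ,
      (catGauss_zzbar c f φ u v *
          ((l1 : ℂ) ^ 2 * (catGauss c f φ u v + (starRingEnd ℂ) (catGauss c f φ u v)) ^ 2 -
            (l2 : ℂ) ^ 2 * (catGauss c f φ u v - (starRingEnd ℂ) (catGauss c f φ u v)) ^ 2) =
        2 * ((l1 : ℂ) ^ 2 * (catGauss c f φ u v + (starRingEnd ℂ) (catGauss c f φ u v)) -
            (l2 : ℂ) ^ 2 * (catGauss c f φ u v - (starRingEnd ℂ) (catGauss c f φ u v))) *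
          catGauss_z c f φ u v * catGauss_zbar c f φ u v) ∧
      catGauss_z c f φ u v * (starRingEnd ℂ) (catGauss_zbar c f φ u v) =
        (1 / 8 : ℂ) * ((Real.cos θ : ℂ) - Complex.I * (Real.sin θ : ℂ)) *
          ((l1 : ℂ) ^ 2 * (catGauss c f φ u v + (starRingEnd ℂ) (catGauss c f φ u v)) ^ 2 -
            (l2 : ℂ) ^ 2 * (catGauss c f φ u v - (starRingEnd ℂ) (catGauss c f φ u v)) ^ 2) := by
  intro u v
  have hR := radicand_pos l1 l2 c θ hl hl2 hc hθ φ
  have dφ : ∀ t, HasDerivAt φ (deriv φ t) t := fun t => (hφ t).hasDerivAt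
  have df : ∀ t, HasDerivAt f (deriv f t) t := fun t => (hf t).hasDerivAt
  have gu : ∀ t w, catGauss_u c f φ t w =
      catGauss c f φ t w * (((deriv f t : ℝ) : ℂ) + Complex.I * ((deriv φ t : ℝ) : ℂ)) :=
    fun t w => (hasDeriv_u c f φ t w _ _ (df t) (dφ t)).deriv
  have gv : ∀ t w, catGauss_v c f φ t w = catGauss c f φ t w * (c : ℂ) :=
    fun t w => (hasDeriv_v c f φ t w).deriv
  have gvv : catGauss_vv c f φ u v = catGauss c f φ u v * (c : ℂ) * c := by
    unfold catGauss_vv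
    simp only [gv]
    exact ((hasDeriv_v c f φ u v).mul_const (c : ℂ)).deriv
  obtain ⟨K, hK⟩ : ∃ K, K = (l1 ^ 2 - l2 ^ 2) * Real.sin (φ u) * Real.cos (φ u) := ⟨_, rfl⟩
  have dB : HasDerivAt (Bfun l1 l2 φ) (-2 * K * deriv φ u) u := by
    have h := (((dφ u).cos.pow 2).const_mul (l1 ^ 2)).add
      (((dφ u).sin.pow 2).const_mul (l2 ^ 2))
    refine h.congr_deriv ?_
    rw [hK]
    push_cast
    ring
  have hq : 0 < deriv φ u := by rw [hφ']; exact Real.sqrt_pos.2 (hR u)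
  have hq2 : deriv φ u ^ 2 = c ^ 2 + 2 * Real.cos θ * Bfun l1 l2 φ u -
        (Real.sin θ / c) ^ 2 * Bfun l1 l2 φ u ^ 2 := by
    rw [hφ']; exact Real.sq_sqrt (hR u).le
  have ddf : HasDerivAt (deriv f) (-2 * (Real.sin θ / c) * K * deriv φ u) u := by
    rw [show deriv f = _ from funext hf']
    exact (dB.const_mul (Real.sin θ / c)).congr_deriv (by ring)
  have ddφ : HasDerivAt (deriv φ)
      (-2 * K * (Real.cos θ - (Real.sin θ / c) ^ 2 * Bfun l1 l2 φ u)) u := by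
    have h := (((dB.const_mul (2 * Real.cos θ)).const_add (c ^ 2)).sub
      ((dB.pow 2).const_mul ((Real.sin θ / c) ^ 2))).sqrt (hR u).ne'
    have h' := h.congr_of_eventuallyEq (Filter.Eventually.of_forall hφ')
    refine h'.congr_deriv ?_
    have e : √(c ^ 2 + 2 * Real.cos θ * Bfun l1 l2 φ u -
        (Real.sin θ / c) ^ 2 * Bfun l1 l2 φ u ^ 2) = deriv φ u := (hφ' u).symm
    simp only [Pi.sub_apply, Pi.pow_apply, Pi.mul_apply, Pi.add_apply, e]
    generalize Real.sin θ / c = D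
    field_simp
    push_cast
    ring
  have guu : catGauss_uu c f φ u v = catGauss c f φ u v *
      (((deriv f u : ℝ) : ℂ) + Complex.I * ((deriv φ u : ℝ) : ℂ)) *
      (((deriv f u : ℝ) : ℂ) + Complex.I * ((deriv φ u : ℝ) : ℂ)) + catGauss c f φ u v *
      (((-2 * (Real.sin θ / c) * K * deriv φ u : ℝ) : ℂ) + Complex.I *
      ((-2 * K * (Real.cos θ - (Real.sin θ / c) ^ 2 * Bfun l1 l2 φ u) : ℝ) : ℂ)) := by
    unfold catGauss_uu
    simp only [gu]
    exact ((hasDeriv_u c f φ u v _ _ (df u) (dφ u)).mul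
      (ddf.ofReal_comp.add (ddφ.ofReal_comp.const_mul Complex.I))).deriv
  have hp := hf' u
  have hsc := Real.sin_sq_add_cos_sq (φ u)
  have hD : c * (Real.sin θ / c) = Real.sin θ := by field_simp
  have hB : Bfun l1 l2 φ u = l1 ^ 2 * Real.cos (φ u) ^ 2 + l2 ^ 2 * Real.sin (φ u) ^ 2 := rfl
  have hg : catGauss c f φ u v = (Real.exp (f u + c * v) : ℂ) *
    ((Real.cos (φ u) : ℂ) + Complex.I * (Real.sin (φ u) : ℂ)) := rfl
  have hgc : (starRingEnd ℂ) (catGauss c f φ u v) = (Real.exp (f u + c * v) : ℂ) *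
    ((Real.cos (φ u) : ℂ) - Complex.I * (Real.sin (φ u) : ℂ)) := by
    rw [hg]
    simp only [map_mul, map_add, Complex.conj_ofReal, Complex.conj_I]
    ring
  have hzb : (starRingEnd ℂ) (catGauss_zbar c f φ u v) =
      (starRingEnd ℂ) (catGauss c f φ u v) *
        (((deriv f u : ℝ) : ℂ) - Complex.I * ((deriv φ u : ℝ) : ℂ) - Complex.I * c) / 2 := by
    simp only [catGauss_zbar, gu, gv, map_mul, map_add, map_div₀, Complex.conj_ofReal,
      Complex.conj_I, map_ofNat]
    ring
  rw [hzb]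
  simp only [catGauss_zzbar, catGauss_z, catGauss_zbar, guu, gvv, gu, gv]
  rw [hgc, hg]
  clear hzb hgc hg guu ddφ ddf dB gvv gv gu df dφ hR
  generalize Real.exp (f u + c * v) = E
  generalize Real.sin θ / c = D at *
  generalize Bfun l1 l2 φ u = B at *
  generalize deriv f u = p at *
  generalize deriv φ u = q at *
  generalize Real.cos (φ u) = C at *
  generalize Real.sin (φ u) = S at *
  generalize Real.cos θ = a at *
  generalize Real.sin θ = b at *
  have hX : (l1 : ℂ) ^ 2 * ((E : ℂ) * (C + Complex.I * S) + E * (C - Complex.I * S)) ^ 2 -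
      (l2 : ℂ) ^ 2 * ((E : ℂ) * (C + Complex.I * S) - E * (C - Complex.I * S)) ^ 2
      = 4 * E ^ 2 * B := by
    rw [hB]; push_cast
    linear_combination (-4 * (l2 : ℂ) ^ 2 * E ^ 2 * S ^ 2) * Complex.I_sq
  have hY : ((l1 : ℂ) ^ 2 * ((E : ℂ) * (C + Complex.I * S) + E * (C - Complex.I * S)) -
      (l2 : ℂ) ^ 2 * ((E : ℂ) * (C + Complex.I * S) - E * (C - Complex.I * S))) *
      (C + Complex.I * S) = 2 * E * (B + Complex.I * K) := by
    rw [hB, hK]; push_cast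
    linear_combination (-2 * (l2 : ℂ) ^ 2 * E * S ^ 2) * Complex.I_sq
  have hN : ((C : ℂ) + Complex.I * S) * (C - Complex.I * S) = 1 := by
    have : (S : ℂ) ^ 2 + (C : ℂ) ^ 2 = 1 := by exact_mod_cast hsc
    linear_combination this - (S : ℂ) ^ 2 * Complex.I_sq
  have hW : ((p : ℂ) + Complex.I * q) ^ 2 + c ^ 2 =
      2 * D ^ 2 * B ^ 2 - 2 * a * B + 2 * Complex.I * D * B * q := by
    have : (q : ℂ) ^ 2 = c ^ 2 + 2 * a * B - D ^ 2 * B ^ 2 := by exact_mod_cast hq2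
    rw [hp]; push_cast
    linear_combination (q : ℂ) ^ 2 * Complex.I_sq - this
  have hq2' : (q : ℂ) ^ 2 = c ^ 2 + 2 * a * B - D ^ 2 * B ^ 2 := by exact_mod_cast hq2
  have hp' : (p : ℂ) = D * B := by exact_mod_cast hp
  have hD' : (c : ℂ) * D = b := by exact_mod_cast hD
  rw [hX]
  generalize (l1 : ℂ) ^ 2 * ((E : ℂ) * (C + Complex.I * S) + E * (C - Complex.I * S)) -
      (l2 : ℂ) ^ 2 * ((E : ℂ) * (C + Complex.I * S) - E * (C - Complex.I * S)) = Y at *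
  generalize (C : ℂ) - Complex.I * S = Gb at *
  generalize (C : ℂ) + Complex.I * S = G at *
  constructor
  · have hprod : (E * G * ((p : ℂ) + Complex.I * q) - Complex.I * (E * G * c)) / 2 *
        ((E * G * ((p : ℂ) + Complex.I * q) + Complex.I * (E * G * c)) / 2) =
        E ^ 2 * G ^ 2 / 4 * (((p : ℂ) + Complex.I * q) ^ 2 + c ^ 2) := by
      linear_combination (-(E : ℂ) ^ 2 * G ^ 2 * c ^ 2 / 4) * Complex.I_sq
    rw [mul_assoc (2 * Y), hprod]
    push_cast
    generalize hw : (p : ℂ) + Complex.I * q = w at *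
    linear_combination (-(E : ℂ) ^ 2 * G / 2 * (w ^ 2 + c ^ 2)) * hY
      - (E : ℂ) ^ 3 * G * Complex.I * K * hW
      - (2 * (E : ℂ) ^ 3 * G * K * D * B * q) * Complex.I_sq
  · linear_combination ((E : ℂ) ^ 2 / 4 * (p + Complex.I * q - Complex.I * c) *
      (p - Complex.I * q - Complex.I * c)) * hN + (E : ℂ) ^ 2 / 4 * hq2'
      + (E : ℂ) ^ 2 / 4 * (p + D * B - 2 * Complex.I * c) * hp'
      - (E : ℂ) ^ 2 / 2 * B * Complex.I * hD'
      - (E : ℂ) ^ 2 / 4 * (q ^ 2 - c ^ 2) * Complex.I_sq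
end

section
/- For every c > 0 there exists a unique θ ∈ (0, π/2) ∩ (0, θ_c⁺) such that H(c,θ) = 0, where H(c,θ) = ∫_{−1}^{1} (D²·B̂(x)·(2c + √(P(x))) − 2c·cos θ) / ((c + √(P(x)))·√((1 − x²)·P(x))) dx with D = sin θ / c, B̂(x) = λ₁²·x² + λ₂²·(1 − x²), and P(x) = c² + 2·cos θ·B̂(x) − D²·B̂(x)². -/
open Real

/-- `B̂(x) = λ₁² x² + λ₂² (1 - x²)`. -/
noncomputable def Bhat (l1 l2 x : ℝ) : ℝ := l1 ^ 2 * x ^ 2 + l2 ^ 2 * (1 - x ^ 2)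

/-- `P(x) = c² + 2 cos θ B̂(x) - D² B̂(x)²` with `D = sin θ / c`. -/
noncomputable def Pfun (l1 l2 c θ x : ℝ) : ℝ :=
  c ^ 2 + 2 * Real.cos θ * Bhat l1 l2 x - (Real.sin θ / c) ^ 2 * Bhat l1 l2 x ^ 2

/-- The period function `H(c,θ)`. -/
noncomputable def Hfun (l1 l2 c θ : ℝ) : ℝ :=
  ∫ x in (-1 : ℝ)..1,
    ((Real.sin θ / c) ^ 2 * Bhat l1 l2 x * (2 * c + Real.sqrt (Pfun l1 l2 c θ x)) -
        2 * c * Real.cos θ) /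
      ((c + Real.sqrt (Pfun l1 l2 c θ x)) * Real.sqrt ((1 - x ^ 2) * Pfun l1 l2 c θ x))


noncomputable def phiAux (k u : ℝ) : ℝ :=
  (2 * (1 + k * u) / √((1 + k * u) ^ 2 - u ^ 2) - 1 - √((1 + k * u) ^ 2 - u ^ 2)) / u

noncomputable def wAux (x : ℝ) : ℝ := 1 / √(1 - x ^ 2)

lemma wAux_int : IntervalIntegrable wAux MeasureTheory.volume (-1) 1 := by
  rw [intervalIntegrable_iff_integrableOn_Ioc_of_le (by norm_num)]
  refine intervalIntegral.integrableOn_deriv_of_nonneg (g := arcsin) continuous_arcsin.continuousOn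
    (fun x hx => Real.hasDerivAt_arcsin (by linarith [hx.1]) (by linarith [hx.2])) ?_
  intro x hx
  exact one_div_nonneg.2 (Real.sqrt_nonneg _)

lemma wAux_nonneg (x : ℝ) : 0 ≤ wAux x := by unfold wAux; positivity

lemma wAux_pos {x : ℝ} (hx : x ∈ Set.Ioo (-1 : ℝ) 1) : 0 < wAux x := by
  have : 0 < 1 - x ^ 2 := by nlinarith [hx.1, hx.2]
  unfold wAux; positivity

lemma Q_pos {k u : ℝ} (hk : 0 ≤ k) (hu : 0 < u) (h : 0 < 1 - u * (1 - k)) :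
    0 < (1 + k * u) ^ 2 - u ^ 2 := by
  have h2 : 0 < 1 + u * (1 + k) := by positivity
  nlinarith [mul_pos h h2]

lemma phi_anti {k k' u : ℝ} (hk : 0 ≤ k) (hu : 0 < u) (h : 0 < 1 - u * (1 - k)) (hkk : k < k') :
    phiAux k' u < phiAux k u := by
  have hQ := Q_pos hk hu h
  have hQ' := Q_pos (hk.trans hkk.le) hu (by nlinarith : 0 < 1 - u * (1 - k'))
  have hku : k * u < k' * u := by nlinarith
  have hku0 : 0 ≤ k * u := by positivity
  have hlt : (1 + k * u) ^ 2 - u ^ 2 < (1 + k' * u) ^ 2 - u ^ 2 := by nlinarith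
  unfold phiAux
  have hq := Real.sqrt_pos.2 hQ
  have hq' := Real.sqrt_pos.2 hQ'
  have hqq := Real.sqrt_lt_sqrt hQ.le hlt
  have e := Real.sq_sqrt hQ.le
  have e' := Real.sq_sqrt hQ'.le
  set q := √((1 + k * u) ^ 2 - u ^ 2)
  set q' := √((1 + k' * u) ^ 2 - u ^ 2)
  have key : 2 * (1 + k' * u) / q' ≤ 2 * (1 + k * u) / q := by
    rw [div_le_div_iff₀ hq' hq]
    have : (1 + k' * u) * q ≤ (1 + k * u) * q' := by
      apply le_of_sq_le_sq _ (by positivity)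
      rw [mul_pow, mul_pow, e, e']
      nlinarith [sq_nonneg u, mul_nonneg (sq_nonneg u) (by nlinarith : 0 ≤ (1 + k' * u) ^ 2 - (1 + k * u) ^ 2)]
    nlinarith
  apply div_lt_div_of_pos_right _ hu
  linarith

lemma phi_one_neg {u : ℝ} (hu : 0 < u) : phiAux 1 u < 0 := by
  unfold phiAux
  have hQ : (1 + 1 * u) ^ 2 - u ^ 2 = 1 + 2 * u := by ring
  rw [hQ]
  have hq : 1 < √(1 + 2 * u) := by
    rw [Real.lt_sqrt (by norm_num)]; linarith
  have e := Real.sq_sqrt (by positivity : 0 ≤ 1 + 2 * u)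
  set q := √(1 + 2 * u)
  apply div_neg_of_neg_of_pos _ hu
  have : 2 * (1 + 1 * u) / q < 1 + q := by
    rw [div_lt_iff₀ (by linarith)]; nlinarith
  linarith

lemma phi_zero_pos {u : ℝ} (hu : 0 < u) (hu1 : u < 1) : 0 < phiAux 0 u := by
  unfold phiAux
  have hQ : (1 + 0 * u) ^ 2 - u ^ 2 = 1 - u ^ 2 := by ring
  rw [hQ]
  have h0 : 0 < 1 - u ^ 2 := by nlinarith
  have hq0 := Real.sqrt_pos.2 h0
  have hq : √(1 - u ^ 2) < 1 := by
    rw [Real.sqrt_lt' (by norm_num)]; nlinarith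
  set q := √(1 - u ^ 2)
  apply div_pos _ hu
  have : 1 + q < 2 * (1 + 0 * u) / q := by
    rw [lt_div_iff₀ hq0]; nlinarith
  linarith

/-- interpolated parameter -/
noncomputable def betaAux (U L x : ℝ) : ℝ := U * x ^ 2 + L * (1 - x ^ 2)

lemma beta_mem {U L x : ℝ} (hUL : L ≤ U) (hx : x ∈ Set.Icc (-1 : ℝ) 1) :
    L ≤ betaAux U L x ∧ betaAux U L x ≤ U := by
  have : 0 ≤ 1 - x ^ 2 := by nlinarith [hx.1, hx.2]
  unfold betaAux
  constructor <;> nlinarith [mul_nonneg (sub_nonneg.2 hUL) this, mul_nonneg (sub_nonneg.2 hUL) (sq_nonneg x)]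

lemma ok_beta {U L x k : ℝ} (hL : 0 < L) (hUL : L ≤ U) (hx : x ∈ Set.Icc (-1 : ℝ) 1)
    (h : 0 < 1 - U * (1 - k)) : 0 < 1 - betaAux U L x * (1 - k) := by
  obtain ⟨h1, h2⟩ := beta_mem hUL hx
  by_cases hk : k ≤ 1
  · nlinarith
  · push Not at hk
    nlinarith [mul_pos (hL.trans_le h1) (sub_pos.2 hk)]

noncomputable def Jaux (U L k : ℝ) : ℝ :=
  ∫ x in (-1 : ℝ)..1, phiAux k (betaAux U L x) * wAux x

lemma J_int {U L k : ℝ} (hL : 0 < L) (hUL : L ≤ U) (hk : 0 ≤ k)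
    (h : 0 < 1 - U * (1 - k)) :
    IntervalIntegrable (fun x => phiAux k (betaAux U L x) * wAux x) MeasureTheory.volume (-1) 1 := by
  apply wAux_int.continuousOn_mul
  rw [Set.uIcc_of_le (by norm_num)]
  have hb : Continuous (betaAux U L) := by unfold betaAux; fun_prop
  have hQ : ContinuousOn (fun x => √((1 + k * betaAux U L x) ^ 2 - betaAux U L x ^ 2))
      (Set.Icc (-1) 1) := by
    apply Continuous.continuousOn; fun_prop
  unfold phiAux
  apply ContinuousOn.div _ hb.continuousOn
  · intro x hx
    exact (hL.trans_le (beta_mem hUL hx).1).ne'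
  · refine ((ContinuousOn.div (by fun_prop) hQ ?_).sub continuousOn_const).sub hQ
    intro x hx
    exact (Real.sqrt_pos.2 (Q_pos hk (hL.trans_le (beta_mem hUL hx).1) (ok_beta hL hUL hx h))).ne'

lemma J_anti {U L k k' : ℝ} (hL : 0 < L) (hUL : L ≤ U) (hk : 0 ≤ k)
    (h : 0 < 1 - U * (1 - k)) (hkk : k < k') : Jaux U L k' < Jaux U L k := by
  have h' : 0 < 1 - U * (1 - k') := by nlinarith
  have i1 := J_int hL hUL hk h
  have i2 := J_int hL hUL (hk.trans hkk.le) h'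
  rw [← sub_pos]
  unfold Jaux
  rw [← intervalIntegral.integral_sub i1 i2]
  apply intervalIntegral.intervalIntegral_pos_of_pos_on (i1.sub i2) _ (by norm_num)
  intro x hx
  have hx' := Set.Ioo_subset_Icc_self hx
  have := phi_anti hk (hL.trans_le (beta_mem hUL hx').1) (ok_beta hL hUL hx' h) hkk
  have := wAux_pos hx
  rw [← sub_mul]
  apply mul_pos _ this
  linarith

lemma J_one_neg {U L : ℝ} (hL : 0 < L) (hUL : L ≤ U) : Jaux U L 1 < 0 := by
  have i1 := J_int hL hUL zero_le_one (by norm_num)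
  rw [← neg_pos]
  unfold Jaux
  rw [← intervalIntegral.integral_neg]
  apply intervalIntegral.intervalIntegral_pos_of_pos_on i1.neg _ (by norm_num)
  intro x hx
  have hx' := Set.Ioo_subset_Icc_self hx
  have := phi_one_neg (hL.trans_le (beta_mem hUL hx').1)
  have := wAux_pos hx
  show 0 < -(phiAux 1 (betaAux U L x) * wAux x)
  nlinarith

lemma J_zero_pos {U L : ℝ} (hL : 0 < L) (hUL : L ≤ U) (hU : U < 1) : 0 < Jaux U L 0 := by
  have i1 := J_int hL hUL le_rfl (by linarith : 0 < 1 - U * (1 - 0))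
  unfold Jaux
  apply intervalIntegral.intervalIntegral_pos_of_pos_on i1 _ (by norm_num)
  intro x hx
  have hx' := Set.Ioo_subset_Icc_self hx
  have hb := beta_mem hUL hx'
  exact mul_pos (phi_zero_pos (hL.trans_le hb.1) (by linarith)) (wAux_pos hx)

lemma J_cont {U L k1 : ℝ} (hL : 0 < L) (hUL : L ≤ U) (hk : 0 ≤ k1)
    (h : 0 < 1 - U * (1 - k1)) (hk1 : k1 < 1) : ContinuousOn (Jaux U L) (Set.Icc k1 1) := by
  have i1 := J_int hL hUL hk h
  have i2 := J_int hL hUL zero_le_one (by norm_num : 0 < 1 - U * (1 - 1))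
  have hle : ∀ k ∈ Set.Icc k1 1, 0 ≤ k ∧ 0 < 1 - U * (1 - k) := by
    intro k hk'
    refine ⟨hk.trans hk'.1, ?_⟩
    nlinarith [hk'.1]
  intro k0 hk0
  unfold Jaux
  refine intervalIntegral.continuousWithinAt_of_dominated_interval
    (bound := fun x => ‖phiAux k1 (betaAux U L x) * wAux x‖ + ‖phiAux 1 (betaAux U L x) * wAux x‖)
    ?_ ?_ (i1.norm.add i2.norm) ?_
  · filter_upwards [self_mem_nhdsWithin] with k hk'
    have := J_int hL hUL (hle k hk').1 (hle k hk').2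
    rw [intervalIntegrable_iff] at this
    exact this.aestronglyMeasurable
  · filter_upwards [self_mem_nhdsWithin] with k hk'
    refine Filter.Eventually.of_forall fun x hx => ?_
    rw [Set.uIoc_of_le (by norm_num)] at hx
    have hx' := Set.Ioc_subset_Icc_self hx
    have hb := hL.trans_le (beta_mem hUL hx').1
    have a1 : phiAux k (betaAux U L x) ≤ phiAux k1 (betaAux U L x) := by
      rcases hk'.1.eq_or_lt with h1 | h1
      · rw [h1]
      · exact (phi_anti hk hb (ok_beta hL hUL hx' h) h1).le
    have a2 : phiAux 1 (betaAux U L x) ≤ phiAux k (betaAux U L x) := by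
      rcases hk'.2.eq_or_lt with h1 | h1
      · rw [h1]
      · exact (phi_anti (hle k hk').1 hb (ok_beta hL hUL hx' (hle k hk').2) h1).le
    rw [norm_mul, norm_mul, norm_mul, ← add_mul]
    apply mul_le_mul_of_nonneg_right _ (norm_nonneg _)
    rw [Real.norm_eq_abs, Real.norm_eq_abs, Real.norm_eq_abs, abs_le]
    constructor
    · linarith [neg_abs_le (phiAux 1 (betaAux U L x)), abs_nonneg (phiAux k1 (betaAux U L x))]
    · linarith [le_abs_self (phiAux k1 (betaAux U L x)), abs_nonneg (phiAux 1 (betaAux U L x))]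
  · refine Filter.Eventually.of_forall fun x hx => ?_
    rw [Set.uIoc_of_le (by norm_num)] at hx
    have hx' := Set.Ioc_subset_Icc_self hx
    have hb := hL.trans_le (beta_mem hUL hx').1
    have hq := (Real.sqrt_pos.2 (Q_pos (hle k0 hk0).1 hb (ok_beta hL hUL hx' (hle k0 hk0).2))).ne'
    apply ContinuousAt.continuousWithinAt
    generalize betaAux U L x = u at *
    have hQc : ContinuousAt (fun k : ℝ => √((1 + k * u) ^ 2 - u ^ 2)) k0 := by
      apply Continuous.continuousAt; fun_prop
    have hN : ContinuousAt (fun k : ℝ => 2 * (1 + k * u)) k0 := by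
      apply Continuous.continuousAt; fun_prop
    have h3 := ((((hN.div hQc hq).sub (continuousAt_const (y := (1:ℝ)))).sub hQc).div_const u).mul
      (continuousAt_const (y := wAux x))
    exact h3

lemma phi_lower {U L k δ x : ℝ} (hL : 0 < L) (hUL : L ≤ U) (hk : 0 ≤ k) (hk1 : k ≤ 1)
    (hδ : 0 < δ) (h : 1 - U * (1 - k) = δ) (hx : x ∈ Set.Icc (-1 : ℝ) 1) :
    2 / U / √(1 + 2 * U) * (1 / √(δ + (1 - x ^ 2))) - (2 + U) / L ≤ phiAux k (betaAux U L x) := by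
  obtain ⟨b1, b2⟩ := beta_mem hUL hx
  have hb := hL.trans_le b1
  have hok := ok_beta hL hUL hx (h ▸ hδ)
  have hQ := Q_pos hk hb hok
  have hx2 : 0 ≤ 1 - x ^ 2 := by nlinarith [hx.1, hx.2]
  have hU : 0 < U := hL.trans_le hUL
  have hdef : U - betaAux U L x = (1 - x ^ 2) * (U - L) := by unfold betaAux; ring
  set u := betaAux U L x
  have hA : 1 - u * (1 - k) ≤ δ + (1 - x ^ 2) := by
    have : 1 - u * (1 - k) = δ + (1 - x ^ 2) * ((U - L) * (1 - k)) := by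
      rw [← mul_assoc, ← hdef, ← h]; ring
    rw [this]
    have h3 : (U - L) * (1 - k) ≤ 1 := by nlinarith
    nlinarith
  have hB : (1 + k * u) ^ 2 - u ^ 2 ≤ (1 + 2 * U) * (δ + (1 - x ^ 2)) := by
    have e : (1 + k * u) ^ 2 - u ^ 2 = (1 + (1 + k) * u) * (1 - u * (1 - k)) := by ring
    rw [e]
    apply mul_le_mul _ hA hok.le (by positivity)
    nlinarith
  have hq := Real.sqrt_pos.2 hQ
  have hq1 : √((1 + k * u) ^ 2 - u ^ 2) ≤ √(1 + 2 * U) * √(δ + (1 - x ^ 2)) := by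
    rw [← Real.sqrt_mul (by positivity)]
    exact Real.sqrt_le_sqrt hB
  have hq2 : √((1 + k * u) ^ 2 - u ^ 2) ≤ 1 + U := by
    rw [Real.sqrt_le_left (by positivity)]
    have : k * u ≤ U := by nlinarith
    have : 0 ≤ k * u := by positivity
    nlinarith
  unfold phiAux
  set q := √((1 + k * u) ^ 2 - u ^ 2)
  have hs1 : 0 < √(1 + 2 * U) := by positivity
  have hs2 : 0 < √(δ + (1 - x ^ 2)) := by positivity
  have e1 : 2 / U / √(1 + 2 * U) * (1 / √(δ + (1 - x ^ 2)))
      = (2 / (√(1 + 2 * U) * √(δ + (1 - x ^ 2)))) / U := by field_simp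
  have e2 : (2 / (√(1 + 2 * U) * √(δ + (1 - x ^ 2)))) / U ≤ (2 * (1 + k * u) / q) / u := by
    apply div_le_div₀ (by positivity) _ hb b2
    apply div_le_div₀ (by positivity) _ hq hq1
    nlinarith [mul_nonneg hk hb.le]
  have e3 : (1 + q) / u ≤ (2 + U) / L := div_le_div₀ (by positivity) (by linarith) hL b1
  rw [e1]
  have e4 : (2 * (1 + k * u) / q - 1 - q) / u = (2 * (1 + k * u) / q) / u - (1 + q) / u := by
    rw [← sub_div]; ring
  rw [e4]
  linarith

lemma J_blow {U L : ℝ} (hL : 0 < L) (hUL : L ≤ U) (hU : 1 ≤ U) :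
    ∃ k, 0 ≤ k ∧ k < 1 ∧ 0 < 1 - U * (1 - k) ∧ 0 < Jaux U L k := by
  have hU0 : 0 < U := by linarith
  set A := 2 / U / √(1 + 2 * U) with hA
  have hApos : 0 < A := by positivity
  set C := (2 + U) / L with hC
  have hCpos : 0 < C := by positivity
  set W := ∫ x in (-1 : ℝ)..1, wAux x with hW
  have hWpos : 0 ≤ W := intervalIntegral.integral_nonneg (by norm_num) fun x _ => wAux_nonneg x
  set δ := exp (-(3 * (C * W + 1) / A)) with hδd
  have hδ : 0 < δ := exp_pos _
  have hδ1 : δ < 1 := by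
    rw [hδd, exp_lt_one_iff]
    have : 0 < 3 * (C * W + 1) / A := by positivity
    linarith
  have hlog : -log δ = 3 * (C * W + 1) / A := by rw [hδd, log_exp]; ring
  set k := 1 - (1 - δ) / U with hkd
  have hkU : 1 - U * (1 - k) = δ := by rw [hkd]; field_simp; ring
  have hk1 : k < 1 := by
    have : 0 < (1 - δ) / U := div_pos (by linarith) hU0
    linarith
  have hk0 : 0 ≤ k := by
    have : (1 - δ) / U ≤ 1 := by rw [div_le_one hU0]; linarith
    linarith
  have hkU' : 0 < 1 - U * (1 - k) := by rw [hkU]; exact hδ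
  refine ⟨k, hk0, hk1, hkU', ?_⟩
  have i1 := J_int hL hUL hk0 hkU'
  have i2 := wAux_int.const_mul C
  have i3 := i1.add i2
  have hlow : ∀ x ∈ Set.Icc (-1 : ℝ) 1, A * (1 / √(δ + (1 - x ^ 2))) * wAux x ≤
      phiAux k (betaAux U L x) * wAux x + C * wAux x := by
    intro x hx
    have := phi_lower hL hUL hk0 hk1.le hδ hkU hx
    rw [← add_mul]
    apply mul_le_mul_of_nonneg_right _ (wAux_nonneg x)
    linarith
  have s1 : Jaux U L k + C * W = ∫ x in (-1 : ℝ)..1,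
      (phiAux k (betaAux U L x) * wAux x + C * wAux x) := by
    rw [intervalIntegral.integral_add i1 i2, intervalIntegral.integral_const_mul]; rfl
  have s2 : ∫ x in (0 : ℝ)..(1 - δ), (phiAux k (betaAux U L x) * wAux x + C * wAux x) ≤
      ∫ x in (-1 : ℝ)..1, (phiAux k (betaAux U L x) * wAux x + C * wAux x) := by
    apply intervalIntegral.integral_mono_interval (by norm_num) (by linarith) (by linarith) _ i3
    rw [Filter.EventuallyLE, MeasureTheory.ae_restrict_iff' measurableSet_Ioc]
    refine Filter.Eventually.of_forall fun x hx => ?_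
    refine le_trans ?_ (hlow x (Set.Ioc_subset_Icc_self hx))
    exact mul_nonneg (by positivity) (wAux_nonneg x)
  have ci : IntervalIntegrable (fun x : ℝ => A / 3 * (1 - x)⁻¹) MeasureTheory.volume 0 (1 - δ) := by
    apply ContinuousOn.intervalIntegrable
    rw [Set.uIcc_of_le (by linarith)]
    apply ContinuousOn.mul continuousOn_const
    apply ContinuousOn.inv₀ (by fun_prop)
    intro x hx
    have := hx.2
    linarith
  have s3 : ∫ x in (0 : ℝ)..(1 - δ), A / 3 * (1 - x)⁻¹ ≤
      ∫ x in (0 : ℝ)..(1 - δ), (phiAux k (betaAux U L x) * wAux x + C * wAux x) := by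
    apply intervalIntegral.integral_mono_on (by linarith) ci
    · apply i3.mono_set
      rw [Set.uIcc_of_le (by linarith), Set.uIcc_of_le (by linarith)]
      exact Set.Icc_subset_Icc (by linarith) (by linarith)
    · intro x hx
      have hx1 := hx.1
      have hx2 := hx.2
      refine le_trans ?_ (hlow x ⟨by linarith, by linarith⟩)
      have hp : 0 < 1 - x := by linarith
      have hp2 : 0 < 1 - x ^ 2 := by nlinarith
      have hm : √(δ + (1 - x ^ 2)) * √(1 - x ^ 2) ≤ 3 * (1 - x) := by
        rw [← Real.sqrt_mul (by positivity), Real.sqrt_le_left (by positivity)]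
        have a1 : δ + (1 - x ^ 2) ≤ 3 * (1 - x) := by nlinarith
        have a2 : 1 - x ^ 2 ≤ 3 * (1 - x) := by nlinarith
        nlinarith [mul_le_mul a1 a2 hp2.le (by positivity)]
      have hs1 : 0 < √(1 - x ^ 2) := by positivity
      have hs2 : 0 < √(δ + (1 - x ^ 2)) := by positivity
      have := one_div_le_one_div_of_le (by positivity) hm
      have e : A * (1 / √(δ + (1 - x ^ 2))) * wAux x
          = A * (1 / (√(δ + (1 - x ^ 2)) * √(1 - x ^ 2))) := by
        unfold wAux; field_simp
      have e' : A / 3 * (1 - x)⁻¹ = A * (1 / (3 * (1 - x))) := by field_simp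
      rw [e, e']
      exact mul_le_mul_of_nonneg_left this hApos.le
  have s4 : ∫ x in (0 : ℝ)..(1 - δ), A / 3 * (1 - x)⁻¹ = A / 3 * (-log δ) := by
    rw [intervalIntegral.integral_const_mul,
      intervalIntegral.integral_comp_sub_left (fun x => x⁻¹) 1, integral_inv_of_pos (by linarith) (by linarith)]
    congr 1
    rw [← Real.log_inv]; congr 1; simp
  have s5 : A / 3 * (-log δ) = C * W + 1 := by rw [hlog]; field_simp
  linarith

lemma H_eq {l1 l2 c θ : ℝ} (hl : l1 ≥ l2) (hl2 : l2 > 0) (hc : 0 < c) (hk : 0 ≤ cos θ)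
    (h : 0 < 1 - l1 ^ 2 / c ^ 2 * (1 - cos θ)) :
    Hfun l1 l2 c θ = 1 / c * Jaux (l1 ^ 2 / c ^ 2) (l2 ^ 2 / c ^ 2) (cos θ) := by
  have hL : 0 < l2 ^ 2 / c ^ 2 := by positivity
  have hUL : l2 ^ 2 / c ^ 2 ≤ l1 ^ 2 / c ^ 2 := by gcongr
  unfold Hfun Jaux
  rw [← intervalIntegral.integral_const_mul]
  apply intervalIntegral.integral_congr
  intro x hx
  rw [Set.uIcc_of_le (by norm_num)] at hx
  have hb := hL.trans_le (beta_mem hUL hx).1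
  have hQ := Q_pos hk hb (ok_beta hL hUL hx h)
  have hB : Bhat l1 l2 x = c ^ 2 * betaAux (l1 ^ 2 / c ^ 2) (l2 ^ 2 / c ^ 2) x := by
    unfold Bhat betaAux; field_simp
  have hx2 : 0 ≤ 1 - x ^ 2 := by nlinarith [hx.1, hx.2]
  have hs : sin θ ^ 2 = 1 - cos θ ^ 2 := by rw [Real.sin_sq]
  have hP : Pfun l1 l2 c θ x = c ^ 2 * ((1 + cos θ * betaAux (l1 ^ 2 / c ^ 2) (l2 ^ 2 / c ^ 2) x) ^ 2
      - betaAux (l1 ^ 2 / c ^ 2) (l2 ^ 2 / c ^ 2) x ^ 2) := by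
    unfold Pfun
    rw [hB, div_pow, hs]; field_simp; ring
  simp only []
  rw [Real.sqrt_mul hx2, hP, Real.sqrt_mul (by positivity), Real.sqrt_sq hc.le, hB, div_pow, hs]
  unfold phiAux wAux
  have hq := Real.sqrt_pos.2 hQ
  have e := Real.sq_sqrt hQ.le
  set u := betaAux (l1 ^ 2 / c ^ 2) (l2 ^ 2 / c ^ 2) x
  set q := √((1 + cos θ * u) ^ 2 - u ^ 2)
  set k := cos θ
  have main : (((1 - k ^ 2) / c ^ 2 * (c ^ 2 * u) * (2 * c + c * q) - 2 * c * k)) / ((c + c * q) * (c * q))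
     = 1 / c * ((2 * (1 + k * u) / q - 1 - q) / u) := by
    have h1 : (1 - k ^ 2) * u ^ 2 = 1 + 2 * k * u - q ^ 2 := by rw [e]; ring
    have h2 : (1 - k ^ 2) / c ^ 2 * (c ^ 2 * u) = (1 + 2 * k * u - q ^ 2) / u := by
      rw [← h1]; field_simp
    rw [h2]
    have : 0 < 1 + q := by linarith
    field_simp
    ring
  rw [← mul_assoc (1 / c), ← main]
  generalize √(1 - x ^ 2) = s
  rw [div_mul_div_comm, mul_one]
  congr 1
  ring

lemma theta_iff {l1 c θ : ℝ} (hl1 : 0 < l1) (hc : 0 < c) (h0 : 0 < θ) (h1 : θ < π / 2) :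
    θ < thetaPlus l1 c ↔ 0 < 1 - l1 ^ 2 / c ^ 2 * (1 - cos θ) := by
  have hpi := Real.pi_pos
  have hcos : 0 < cos θ := cos_pos_of_mem_Ioo ⟨by linarith, h1⟩
  have hr : 0 < 1 - l1 ^ 2 / c ^ 2 * (1 - cos θ) ↔ 1 - c ^ 2 / l1 ^ 2 < cos θ := by
    rw [sub_pos, div_mul_eq_mul_div, div_lt_one (by positivity), sub_lt_comm,
      lt_div_iff₀ (by positivity), mul_comm]
  rw [hr]
  unfold thetaPlus
  have h2 : √2 ^ 2 = 2 := Real.sq_sqrt (by norm_num)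
  split_ifs with h
  · constructor
    · intro _
      have : 1 < c ^ 2 / l1 ^ 2 := by
        rw [lt_div_iff₀ (by positivity)]
        have : (√2 * l1) ^ 2 < c ^ 2 := by gcongr
        rw [mul_pow, h2] at this
        nlinarith [sq_nonneg l1]
      linarith
    · intro _; linarith
  · push Not at h
    have hy : -1 ≤ 1 - c ^ 2 / l1 ^ 2 := by
      have : c ^ 2 / l1 ^ 2 ≤ 2 := by
        rw [div_le_iff₀ (by positivity)]
        have : c ^ 2 ≤ (√2 * l1) ^ 2 := by gcongr
        rwa [mul_pow, h2] at this
      linarith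
    have hy1 : 1 - c ^ 2 / l1 ^ 2 ≤ 1 := by
      have : 0 ≤ c ^ 2 / l1 ^ 2 := by positivity
      linarith
    constructor
    · intro hlt
      have := cos_lt_cos_of_nonneg_of_le_pi h0.le (arccos_le_pi _) hlt
      rwa [cos_arccos hy hy1] at this
    · intro hlt
      rw [← arccos_cos h0.le (by linarith)]
      exact Real.arccos_lt_arccos hy hlt (cos_le_one _)

theorem catenoid_period_problem_solvable
    (l1 l2 : ℝ) (hl : l1 ≥ l2) (hl2 : l2 > 0) :
    ∀ c > 0, ∃! θ, θ ∈ Set.Ioo 0 (π / 2) ∩ Set.Ioo 0 (thetaPlus l1 c) ∧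
      Hfun l1 l2 c θ = 0 := by
  intro c hc
  have hl1 : 0 < l1 := lt_of_lt_of_le hl2 hl
  have hL : 0 < l2 ^ 2 / c ^ 2 := by positivity
  have hUL : l2 ^ 2 / c ^ 2 ≤ l1 ^ 2 / c ^ 2 := by gcongr
  have hpi := Real.pi_pos
  have hex : ∃ k1, 0 ≤ k1 ∧ k1 < 1 ∧ 0 < 1 - l1 ^ 2 / c ^ 2 * (1 - k1) ∧
      0 < Jaux (l1 ^ 2 / c ^ 2) (l2 ^ 2 / c ^ 2) k1 := by
    rcases lt_or_ge (l1 ^ 2 / c ^ 2) 1 with hU | hU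
    · exact ⟨0, le_rfl, one_pos, by linarith, J_zero_pos hL hUL hU⟩
    · exact J_blow hL hUL hU
  obtain ⟨k1, hk0, hk1, hkU, hJ⟩ := hex
  have hJ1 := J_one_neg hL hUL
  obtain ⟨k, hk, hJk⟩ := intermediate_value_Ioo' hk1.le (J_cont hL hUL hk0 hkU hk1) ⟨hJ1, hJ⟩
  have hkpos : 0 < k := lt_of_le_of_lt hk0 hk.1
  have hcosk : cos (arccos k) = k := cos_arccos (by linarith) hk.2.le
  have hkU' : 0 < 1 - l1 ^ 2 / c ^ 2 * (1 - cos (arccos k)) := by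
    rw [hcosk]
    have : 0 < l1 ^ 2 / c ^ 2 := by positivity
    nlinarith [hk.1]
  have t0 : 0 < arccos k := arccos_pos.2 hk.2
  have t1 : arccos k < π / 2 := arccos_lt_pi_div_two.2 hkpos
  refine ⟨arccos k, ⟨⟨⟨t0, t1⟩, ⟨t0, (theta_iff hl1 hc t0 t1).2 hkU'⟩⟩, ?_⟩, ?_⟩
  · rw [H_eq hl hl2 hc (by rw [hcosk]; exact hkpos.le) hkU', hcosk, hJk, mul_zero]
  · rintro θ ⟨⟨⟨a0, a1⟩, ⟨_, a2⟩⟩, hH⟩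
    have hcos : 0 < cos θ := cos_pos_of_mem_Ioo ⟨by linarith, a1⟩
    have hok := (theta_iff hl1 hc a0 a1).1 a2
    rw [H_eq hl hl2 hc hcos.le hok] at hH
    have hJθ : Jaux (l1 ^ 2 / c ^ 2) (l2 ^ 2 / c ^ 2) (cos θ) = 0 := by
      rcases mul_eq_zero.1 hH with h | h
      · have : 0 < 1 / c := by positivity
        linarith
      · exact h
    have : cos θ = k := by
      rcases lt_trichotomy (cos θ) k with h | h | h
      · have := J_anti hL hUL hcos.le hok h
        linarith
      · exact h
      · rw [hcosk] at hkU'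
        have := J_anti hL hUL hkpos.le hkU' h
        linarith
    rw [← this, arccos_cos a0.le (by linarith)]
end

section
/- For every c > 0: (1) H(c,0) < 0; and (2) the function θ ↦ H(c,θ) is strictly increasing on the interval (0, π/2) ∩ (0, θ_c⁺), where H(c,θ) = ∫_{−1}^{1} (D²·B̂(x)·(2c + √(P(x))) − 2c·cos θ) / ((c + √(P(x)))·√((1 − x²)·P(x))) dx with D = sin θ / c, B̂(x) = λ₁²·x² + λ₂²·(1 − x²), and P(x) = c² + 2·cos θ·B̂(x) − D²·B̂(x)². -/
open Real

lemma cat_P_eq (l1 l2 c θ x : ℝ) (hc : 0 < c) :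
    Pfun l1 l2 c θ x = (c ^ 2 + (1 + Real.cos θ) * Bhat l1 l2 x) *
      (c ^ 2 - (1 - Real.cos θ) * Bhat l1 l2 x) / c ^ 2 := by
  unfold Pfun
  rw [div_pow, Real.sin_sq]
  field_simp
  ring

lemma cat_B_pos (l1 l2 x : ℝ) (hl : l1 ≥ l2) (hl2 : l2 > 0) (hx : x ∈ Set.Icc (-1 : ℝ) 1) :
    0 < Bhat l1 l2 x ∧ Bhat l1 l2 x ≤ l1 ^ 2 := by
  have h1 : x ^ 2 ≤ 1 := by nlinarith [hx.1, hx.2]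
  have h2 : l2 ^ 2 ≤ l1 ^ 2 := by nlinarith
  have h3 : 0 < l2 ^ 2 := by positivity
  unfold Bhat
  constructor <;> nlinarith [sq_nonneg x]

lemma cat_P_pos (l1 l2 c θ x : ℝ) (hc : 0 < c) (hl : l1 ≥ l2) (hl2 : l2 > 0)
    (hx : x ∈ Set.Icc (-1 : ℝ) 1) (hθ : (1 - Real.cos θ) * l1 ^ 2 < c ^ 2) :
    0 < Pfun l1 l2 c θ x := by
  obtain ⟨h1, h2⟩ := cat_B_pos l1 l2 x hl hl2 hx
  rw [cat_P_eq _ _ _ _ _ hc]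
  have h3 : 0 ≤ 1 - Real.cos θ := by linarith [Real.cos_le_one θ]
  have h4 : 0 ≤ 1 + Real.cos θ := by linarith [Real.neg_one_le_cos θ]
  have h5 := mul_le_mul_of_nonneg_left h2 h3
  have h6 : 0 < c ^ 2 - (1 - Real.cos θ) * Bhat l1 l2 x := by linarith
  positivity

lemma cat_good (l1 c θ : ℝ) (hc : 0 < c) (hl1 : 0 < l1)
    (h0 : 0 < θ) (h : θ < thetaPlus l1 c) : (1 - Real.cos θ) * l1 ^ 2 < c ^ 2 := by
  unfold thetaPlus at h
  split_ifs at h with hh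
  · have h2 : (Real.sqrt 2 * l1) ^ 2 < c ^ 2 := by
      apply pow_lt_pow_left₀ hh (by positivity) (by norm_num)
    rw [mul_pow, Real.sq_sqrt (by norm_num)] at h2
    nlinarith [Real.neg_one_le_cos θ, sq_nonneg l1]
  · have h2 : c ^ 2 ≤ (Real.sqrt 2 * l1) ^ 2 := by
      apply pow_le_pow_left₀ hc.le (not_lt.mp hh)
    rw [mul_pow, Real.sq_sqrt (by norm_num)] at h2
    have hl : 0 < l1 ^ 2 := by positivity
    have h3 : c ^ 2 / l1 ^ 2 ≤ 2 := by rw [div_le_iff₀ hl]; exact h2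
    have h4 : 0 < c ^ 2 / l1 ^ 2 := by positivity
    have h5 := Real.cos_lt_cos_of_nonneg_of_le_pi h0.le (Real.arccos_le_pi _) h
    rw [Real.cos_arccos (by linarith) (by linarith)] at h5
    rw [← lt_div_iff₀ hl]
    linarith

lemma cat_w_int : IntervalIntegrable (fun x : ℝ => 1 / Real.sqrt (1 - x ^ 2))
    MeasureTheory.volume (-1) 1 := by
  apply intervalIntegral.intervalIntegrable_deriv_of_nonneg (g := Real.arcsin)
  · exact Real.continuous_arcsin.continuousOn
  · intro x hx
    norm_num at hx
    exact Real.hasDerivAt_arcsin (by linarith [hx.1]) (by linarith [hx.2])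
  · intro x hx
    positivity

noncomputable def catF (l1 l2 c θ x : ℝ) : ℝ :=
    ((Real.sin θ / c) ^ 2 * Bhat l1 l2 x * (2 * c + Real.sqrt (Pfun l1 l2 c θ x)) -
        2 * c * Real.cos θ) /
      ((c + Real.sqrt (Pfun l1 l2 c θ x)) * Real.sqrt ((1 - x ^ 2) * Pfun l1 l2 c θ x))

lemma cat_F_int (l1 l2 c θ : ℝ) (hc : 0 < c) (hl : l1 ≥ l2) (hl2 : l2 > 0)
    (hθ : (1 - Real.cos θ) * l1 ^ 2 < c ^ 2) :
    IntervalIntegrable (catF l1 l2 c θ) MeasureTheory.volume (-1) 1 := by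
  have hP : ∀ x ∈ Set.uIcc (-1 : ℝ) 1, 0 < Pfun l1 l2 c θ x := by
    intro x hx
    rw [Set.uIcc_of_le (by norm_num)] at hx
    exact cat_P_pos l1 l2 c θ x hc hl hl2 hx hθ
  have hcB : Continuous (Bhat l1 l2) := by unfold Bhat; fun_prop
  have hcP : Continuous (Pfun l1 l2 c θ) := by unfold Pfun; fun_prop
  have hg : ContinuousOn (fun x => ((Real.sin θ / c) ^ 2 * Bhat l1 l2 x *
      (2 * c + Real.sqrt (Pfun l1 l2 c θ x)) - 2 * c * Real.cos θ) /
      ((c + Real.sqrt (Pfun l1 l2 c θ x)) * Real.sqrt (Pfun l1 l2 c θ x)))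
      (Set.uIcc (-1 : ℝ) 1) := by
    apply ContinuousOn.div
    · fun_prop
    · fun_prop
    · intro x hx
      have := Real.sqrt_pos.mpr (hP x hx)
      positivity
  refine (cat_w_int.continuousOn_mul hg).congr ?_
  intro x hx
  have hx' := Set.uIoc_subset_uIcc hx
  simp only [catF]
  rw [Real.sqrt_mul' _ (hP x hx').le, div_mul_div_comm, mul_one]
  congr 1
  ring

lemma cat_F_eq (l1 l2 c θ x : ℝ) (hc : 0 < c) (hB : 0 < Bhat l1 l2 x)
    (hP : 0 < Pfun l1 l2 c θ x) :
    catF l1 l2 c θ x = (((Real.sin θ / c) ^ 2 * Bhat l1 l2 x + c ^ 2 / Bhat l1 l2 x) /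
      Real.sqrt (Pfun l1 l2 c θ x) - c / Bhat l1 l2 x) / Real.sqrt (1 - x ^ 2) := by
  unfold catF
  rw [Real.sqrt_mul' _ hP.le, mul_comm (Real.sqrt (1 - x ^ 2)), ← mul_assoc, ← div_div]
  congr 1
  have hq := Real.sqrt_pos.mpr hP
  have h2 : Real.sqrt (Pfun l1 l2 c θ x) ^ 2 = c ^ 2 + 2 * Real.cos θ * Bhat l1 l2 x -
    (Real.sin θ / c) ^ 2 * Bhat l1 l2 x ^ 2 := Real.sq_sqrt hP.le
  generalize Real.sqrt (Pfun l1 l2 c θ x) = q at *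
  generalize Bhat l1 l2 x = b at *
  generalize Real.sin θ / c = S at *
  have hcq : 0 < c + q := by linarith
  field_simp
  linear_combination c * h2

lemma cat_F_lt (l1 l2 c s t x : ℝ) (hc : 0 < c) (hB : 0 < Bhat l1 l2 x)
    (hPs : 0 < Pfun l1 l2 c s x) (hPt : 0 < Pfun l1 l2 c t x) (hx : x ∈ Set.Ioo (-1 : ℝ) 1)
    (hs : 0 < s) (hst : s < t) (ht : t < π / 2) : catF l1 l2 c s x < catF l1 l2 c t x := by
  rw [cat_F_eq _ _ _ _ _ hc hB hPs, cat_F_eq _ _ _ _ _ hc hB hPt]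
  have hw : 0 < Real.sqrt (1 - x ^ 2) := Real.sqrt_pos.mpr (by nlinarith [hx.1, hx.2])
  have hsin : Real.sin s < Real.sin t := Real.sin_lt_sin_of_lt_of_le_pi_div_two (by linarith) ht.le hst
  have hcos : Real.cos t < Real.cos s :=
    Real.cos_lt_cos_of_nonneg_of_le_pi hs.le (by linarith) hst
  have hs0 : 0 < Real.sin s := Real.sin_pos_of_pos_of_lt_pi hs (by linarith)
  have hS : (Real.sin s / c) ^ 2 < (Real.sin t / c) ^ 2 := by gcongr
  have hPP : Pfun l1 l2 c t x < Pfun l1 l2 c s x := by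
    unfold Pfun
    have := mul_lt_mul_of_pos_right hS (pow_pos hB 2)
    have := mul_lt_mul_of_pos_right hcos hB
    linarith
  have hq := Real.sqrt_lt_sqrt hPt.le hPP
  have hqt := Real.sqrt_pos.mpr hPt
  gcongr

theorem catenoid_H_negative_at_zero_and_strictMono
    (l1 l2 : ℝ) (hl : l1 ≥ l2) (hl2 : l2 > 0) :
    ∀ c > 0, Hfun l1 l2 c 0 < 0 ∧
      StrictMonoOn (fun θ => Hfun l1 l2 c θ)
        (Set.Ioo 0 (π / 2) ∩ Set.Ioo 0 (thetaPlus l1 c)) := by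
  intro c hc
  have hH : ∀ θ, Hfun l1 l2 c θ = ∫ x in (-1 : ℝ)..1, catF l1 l2 c θ x := fun _ => rfl
  constructor
  · have h0 : (1 - Real.cos 0) * l1 ^ 2 < c ^ 2 := by
      rw [Real.cos_zero]; have : 0 < c ^ 2 := by positivity
      linarith
    have hi := cat_F_int l1 l2 c 0 hc hl hl2 h0
    have := intervalIntegral.intervalIntegral_pos_of_pos_on hi.neg (fun x hx => ?_)
      (by norm_num : (-1 : ℝ) < 1)
    · rw [hH]
      simp only [Pi.neg_apply, intervalIntegral.integral_neg] at this
      linarith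
    · have hP := cat_P_pos l1 l2 c 0 x hc hl hl2 ⟨hx.1.le, hx.2.le⟩ h0
      have hw : 0 < 1 - x ^ 2 := by nlinarith [hx.1, hx.2]
      have h1 : 0 < Real.sqrt ((1 - x ^ 2) * Pfun l1 l2 c 0 x) :=
        Real.sqrt_pos.mpr (mul_pos hw hP)
      have : catF l1 l2 c 0 x < 0 := by
        unfold catF
        apply div_neg_of_neg_of_pos
        · simp [hc]
        · positivity
      simpa using this
  · rintro s ⟨⟨hs, _⟩, _, hs2⟩ t ⟨⟨ht, ht1⟩, _, ht2⟩ hst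
    have hl1 : 0 < l1 := lt_of_lt_of_le hl2 hl
    have gs := cat_good l1 c s hc hl1 hs hs2
    have gt := cat_good l1 c t hc hl1 ht ht2
    have is := cat_F_int l1 l2 c s hc hl hl2 gs
    have it := cat_F_int l1 l2 c t hc hl hl2 gt
    have := intervalIntegral.intervalIntegral_pos_of_pos_on (it.sub is) (fun x hx => ?_)
      (by norm_num : (-1 : ℝ) < 1)
    · simp only [hH]
      rw [intervalIntegral.integral_sub it is] at this
      linarith
    · have hx' : x ∈ Set.Icc (-1 : ℝ) 1 := ⟨hx.1.le, hx.2.le⟩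
      exact sub_pos.mpr (cat_F_lt l1 l2 c s t x hc (cat_B_pos l1 l2 x hl hl2 hx').1
        (cat_P_pos l1 l2 c s x hc hl hl2 hx' gs) (cat_P_pos l1 l2 c t x hc hl hl2 hx' gt)
        hx hs hst ht1)
end

section
/- Let φ : ℝ → ℝ be differentiable with φ(0) = 0 and φ'(u) = √(c² + 2·cos θ·B(u) − D²·B(u)²) for all u, where B(u) = λ₁²·cos²(φ u) + λ₂²·sin²(φ u) and D = sin θ / c; let U > 0 satisfy φ(u + U) = φ(u) + π for all u; let f : ℝ → ℝ be differentiable with f(0) = 0 and f'(u) = D·B(u); and define G(u) = ∫₀^u (c − φ'(s))/B(s) ds, A(u,v) = f(u) + c·v, and x₃(u,v) = −λ₁·λ₂·D·v + λ₁·λ₂·G(u). Assume D·f(U) + c·G(U) = 0. Then for all (u,v) ∈ ℝ²: (1) A(u + 2U, v − 2·f(U)/c) = A(u,v); (2) x₃(u + 2U, v − 2·f(U)/c) = x₃(u,v); and (3) φ(u + 2U) = φ(u) + 2π. -/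
open Real

/-- The function `G(u) = ∫₀^u (c - φ'(s))/B(s) ds`. -/
noncomputable def Gfun (l1 l2 c : ℝ) (φ : ℝ → ℝ) (u : ℝ) : ℝ :=
  ∫ s in (0 : ℝ)..u, (c - deriv φ s) / Bfun l1 l2 φ s

/-- `A(u,v) = f(u) + c v`. -/
noncomputable def Afun (c : ℝ) (f : ℝ → ℝ) (u v : ℝ) : ℝ := f u + c * v

/-- The third coordinate `x₃(u,v) = -λ₁ λ₂ D v + λ₁ λ₂ G(u)`. -/
noncomputable def x3fun (l1 l2 c θ : ℝ) (φ : ℝ → ℝ) (u v : ℝ) : ℝ :=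
  -(l1 * l2 * (Real.sin θ / c)) * v + l1 * l2 * Gfun l1 l2 c φ u

theorem catenoid_periodicity
    (l1 l2 c θ : ℝ) (hl : l1 ≥ l2) (hl2 : l2 > 0) (hc : c > 0)
    (hθ : |θ| < thetaPlus l1 c)
    (φ : ℝ → ℝ) (hφ : Differentiable ℝ φ) (hφ0 : φ 0 = 0)
    (hφ' : ∀ u, deriv φ u =
      Real.sqrt (c ^ 2 + 2 * Real.cos θ * Bfun l1 l2 φ u -
        (Real.sin θ / c) ^ 2 * Bfun l1 l2 φ u ^ 2))
    (U : ℝ) (hU : U > 0) (hφU : ∀ u, φ (u + U) = φ u + π)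
    (f : ℝ → ℝ) (hf : Differentiable ℝ f) (hf0 : f 0 = 0)
    (hf' : ∀ u, deriv f u = (Real.sin θ / c) * Bfun l1 l2 φ u)
    (hperiod : (Real.sin θ / c) * f U + c * Gfun l1 l2 c φ U = 0) :
    ∀ u v : ℝ,
      Afun c f (u + 2 * U) (v - 2 * f U / c) = Afun c f u v ∧
      x3fun l1 l2 c θ φ (u + 2 * U) (v - 2 * f U / c) = x3fun l1 l2 c θ φ u v ∧
      φ (u + 2 * U) = φ u + 2 * π := by
  have hB : ∀ s, Bfun l1 l2 φ (s + U) = Bfun l1 l2 φ s := by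
    intro s
    simp [Bfun, hφU, Real.cos_add_pi, Real.sin_add_pi]
  have hBpos : ∀ s, Bfun l1 l2 φ s ≠ 0 := by
    intro s
    have h1 := Real.sin_sq_add_cos_sq (φ s)
    have h2 : l2 ^ 2 ≤ l1 ^ 2 := by nlinarith
    have h3 : 0 < l2 ^ 2 := by positivity
    have h4 : l2 ^ 2 ≤ Bfun l1 l2 φ s := by
      unfold Bfun
      nlinarith [mul_nonneg (sub_nonneg.2 h2) (sq_nonneg (Real.cos (φ s)))]
    linarith
  have hBc : Continuous (Bfun l1 l2 φ) := by
    have := hφ.continuous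
    unfold Bfun
    fun_prop
  have hdc : Continuous (deriv φ) := by
    rw [funext hφ']
    fun_prop
  have hgc : Continuous (fun s => (c - deriv φ s) / Bfun l1 l2 φ s) :=
    (continuous_const.sub hdc).div hBc hBpos
  have hG : ∀ u, Gfun l1 l2 c φ (u + U) = Gfun l1 l2 c φ u + Gfun l1 l2 c φ U := by
    intro u
    unfold Gfun
    rw [← intervalIntegral.integral_add_adjacent_intervals
      (hgc.intervalIntegrable 0 U) (hgc.intervalIntegrable U (u + U)), add_comm]
    congr 1
    have := intervalIntegral.integral_comp_add_right (a := 0) (b := u)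
      (fun s => (c - deriv φ s) / Bfun l1 l2 φ s) U
    rw [zero_add] at this
    rw [← this]
    simp only [hφ', hB]
  have hF : ∀ u, f (u + U) = f u + f U := by
    intro u
    have hd : ∀ x, HasDerivAt (fun x => f (x + U) - f x) 0 x := by
      intro x
      have h1 := ((hf (x + U)).hasDerivAt.comp_add_const x U).sub (hf x).hasDerivAt
      rw [hf', hf', hB, sub_self] at h1
      exact h1
    have := is_const_of_deriv_eq_zero (fun x => (hd x).differentiableAt)
      (fun x => (hd x).deriv) u 0
    simp only [zero_add, hf0] at this
    linarith
  intro u v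
  have e : u + 2 * U = (u + U) + U := by ring
  have hc' : c ≠ 0 := hc.ne'
  rw [e]
  refine ⟨?_, ?_, ?_⟩
  · simp only [Afun, hF]
    field_simp
    ring
  · have hGU : Gfun l1 l2 c φ U = -((Real.sin θ / c) * f U) / c := by
      field_simp
      field_simp at hperiod
      linarith
    simp only [x3fun, hG, hGU]
    field_simp
    ring
  · rw [hφU, hφU]
    ring
end

section
/- Assume λ₁ ≥ 1 and c > λ₁², and let θ ∈ (0, π/2). Let φ : ℝ → ℝ be differentiable with φ(0) = 0 and φ'(u) = √(c² + 2·cos θ·B(u) − D²·B(u)²) for all u, where B(u) = λ₁²·cos²(φ u) + λ₂²·sin²(φ u) and D = sin θ / c, and let f : ℝ → ℝ be differentiable with f(0) = 0 and f'(u) = D·B(u). Then for all u ∈ ℝ: (1) |f'(u)| ≤ λ₁²/c and |f(u)| ≤ (λ₁²/c)·|u|; (2) √(c² − λ₁⁴) ≤ φ'(u) ≤ √(c² + 2·λ₁²); (3) |c − φ'(u)| ≤ (λ₁²/c)·(λ₁²/c² + 2). -/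
open Real

theorem catenoid_asymptotic_estimates
    (l1 l2 c θ : ℝ) (hl : l1 ≥ l2) (hl2 : l2 > 0)
    (hl1 : l1 ≥ 1) (hc : c > l1 ^ 2) (hθ : θ ∈ Set.Ioo 0 (π / 2))
    (φ : ℝ → ℝ) (hφ : Differentiable ℝ φ) (hφ0 : φ 0 = 0)
    (hφ' : ∀ u, deriv φ u =
      Real.sqrt (c ^ 2 + 2 * Real.cos θ * Bfun l1 l2 φ u -
        (Real.sin θ / c) ^ 2 * Bfun l1 l2 φ u ^ 2))
    (f : ℝ → ℝ) (hf : Differentiable ℝ f) (hf0 : f 0 = 0)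
    (hf' : ∀ u, deriv f u = (Real.sin θ / c) * Bfun l1 l2 φ u) :
    ∀ u : ℝ,
      |deriv f u| ≤ l1 ^ 2 / c ∧
      |f u| ≤ (l1 ^ 2 / c) * |u| ∧
      Real.sqrt (c ^ 2 - l1 ^ 4) ≤ deriv φ u ∧
      deriv φ u ≤ Real.sqrt (c ^ 2 + 2 * l1 ^ 2) ∧
      |c - deriv φ u| ≤ (l1 ^ 2 / c) * (l1 ^ 2 / c ^ 2 + 2) := by
  have hL1 : (1:ℝ) ≤ l1 ^ 2 := by nlinarith
  have hc1 : 1 < c := by linarith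
  have hc0 : 0 < c := by linarith
  have hB0 : ∀ u, 0 ≤ Bfun l1 l2 φ u := fun u => by unfold Bfun; positivity
  have hB1 : ∀ u, Bfun l1 l2 φ u ≤ l1 ^ 2 := fun u => by
    unfold Bfun
    have h1 := Real.sin_sq_add_cos_sq (φ u)
    have h2 : l2 ^ 2 ≤ l1 ^ 2 := by nlinarith
    have h3 := mul_le_mul_of_nonneg_right h2 (sq_nonneg (Real.sin (φ u)))
    have h4 : l1 ^ 2 * Real.cos (φ u) ^ 2 + l1 ^ 2 * Real.sin (φ u) ^ 2 = l1 ^ 2 := by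
      rw [← mul_add, add_comm (Real.cos (φ u) ^ 2), h1, mul_one]
    linarith
  have hs0 : 0 ≤ Real.sin θ :=
    (Real.sin_pos_of_pos_of_lt_pi hθ.1 (by linarith [hθ.2, Real.pi_pos])).le
  have hs1 := Real.sin_le_one θ
  have hk0 : 0 ≤ Real.cos θ :=
    Real.cos_nonneg_of_neg_pi_div_two_le_of_le (by linarith [hθ.1, Real.pi_pos]) hθ.2.le
  have hk1 := Real.cos_le_one θ
  have hE0 : ∀ u, 0 ≤ Real.sin θ / c * Bfun l1 l2 φ u := fun u =>
    mul_nonneg (div_nonneg hs0 hc0.le) (hB0 u)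
  have hE1 : ∀ u, Real.sin θ / c * Bfun l1 l2 φ u ≤ l1 ^ 2 / c := fun u => by
    rw [div_mul_eq_mul_div]
    apply div_le_div_of_nonneg_right _ hc0.le
    nlinarith [hB0 u, hB1 u]
  have hd : ∀ u, |deriv f u| ≤ l1 ^ 2 / c := fun u => by
    rw [hf', abs_of_nonneg (hE0 u)]; exact hE1 u
  intro u
  refine ⟨hd u, ?_, ?_⟩
  · have := Convex.norm_image_sub_le_of_norm_deriv_le (f := f) (s := Set.univ) (x := 0) (y := u)
      (fun x _ => hf x) (fun x _ => hd x) convex_univ trivial trivial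
    simpa [hf0] using this
  have hEs : (Real.sin θ / c) ^ 2 * Bfun l1 l2 φ u ^ 2 ≤ (l1 ^ 2 / c) ^ 2 := by
    rw [← mul_pow]
    exact pow_le_pow_left₀ (hE0 u) (hE1 u) 2
  have hEp : 0 ≤ (Real.sin θ / c) ^ 2 * Bfun l1 l2 φ u ^ 2 := by positivity
  have hLc : (l1 ^ 2 / c) ^ 2 ≤ l1 ^ 4 := by
    have h : l1 ^ 2 / c ≤ l1 ^ 2 := div_le_self (by positivity) hc1.le
    calc (l1 ^ 2 / c) ^ 2 ≤ (l1 ^ 2) ^ 2 := pow_le_pow_left₀ (by positivity) h 2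
      _ = l1 ^ 4 := by ring
  have hK0 : 0 ≤ Real.cos θ * Bfun l1 l2 φ u := mul_nonneg hk0 (hB0 u)
  have hK1 : Real.cos θ * Bfun l1 l2 φ u ≤ l1 ^ 2 := by nlinarith [hB0 u, hB1 u]
  have hc4 : l1 ^ 4 ≤ c ^ 2 := by
    calc l1 ^ 4 = (l1 ^ 2) ^ 2 := by ring
      _ ≤ c ^ 2 := pow_le_pow_left₀ (by positivity) hc.le 2
  rw [hφ']
  refine ⟨Real.sqrt_le_sqrt (by linarith), Real.sqrt_le_sqrt (by linarith), ?_⟩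
  set X := c ^ 2 + 2 * Real.cos θ * Bfun l1 l2 φ u -
        (Real.sin θ / c) ^ 2 * Bfun l1 l2 φ u ^ 2 with hX
  have hX0 : 0 ≤ X := by linarith
  have hsq := Real.sq_sqrt hX0
  have hr := Real.sqrt_nonneg X
  have h1 : |c - √X| * c ≤ 2 * l1 ^ 2 + (l1 ^ 2 / c) ^ 2 := by
    calc |c - √X| * c ≤ |c - √X| * (c + √X) :=
          mul_le_mul_of_nonneg_left (by linarith) (abs_nonneg _)
      _ = |(c - √X) * (c + √X)| := by
          rw [abs_mul, abs_of_nonneg (by linarith : 0 ≤ c + √X)]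
      _ = |c ^ 2 - X| := by congr 1; linear_combination -hsq
      _ ≤ _ := by
          rw [abs_le]
          constructor <;> linarith [sq_nonneg (l1 ^ 2 / c)]
  have h2 : l1 ^ 2 / c * (l1 ^ 2 / c ^ 2 + 2) = (2 * l1 ^ 2 + (l1 ^ 2 / c) ^ 2) / c := by
    field_simp
    ring
  rw [h2, le_div_iff₀ hc0]
  exact h1
end
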